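/- Let Λ ⊂ V and decompose H = H_in ⊕ H_out, where H_in is spanned by the simplices with all vertices in Λ, so that the Gauss–Bonnet operator decomposes in block form D = [[D_in, C],[C*, D_out]] with D_in, D_out the restrictions to H_in, H_out and C the coupling operator. Assume: (1) the restricted complex S_n|_Λ is globally χ-complete (hence D_in is essentially self-adjoint); (2) D_out is essentially self-adjoint on its finitely supported domain; (3) C extends to a compact (in particular bounded) operator. Then the global operator D is essentially self-adjoint on ⊕_{i=0}^n C_c^i(V). -/

import Mathlib

/-!
Write `P` and `Q` for the projections onto the simplices over `Λ` and onto the remaining ones.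
Each face of a simplex over `Λ` lies over `Λ`, so the coupling `C = P D Q` consists of the
components `P δ Q`, and the opposite block `Q D P` of the components `Q d P`.

*The off-diagonal blocks are bounded.*  For `P δ Q` the bound is part of the hypothesis on `C`;
it passes from finitely supported cochains to all cochains because `δ` is local (`cpl_bound`).
Summation by parts (`sum_d_mul_conj`) shows that `Q d P` is, up to signs and combinatorial
factors, the adjoint of `P δ Q`, hence bounded as well (`cst_bound`).  Consequently, if `u` and
`D u` are square-summable, so are `D_in u` and `D_out u` (`energy_diag_ne_top`).

*Approximation of the two components.*  The component `Q u` is approximated in the graph norm of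
`D_out` by the essential self-adjointness of `D_out`.  For `P u` cut-offs are used.  Global
`χ`-completeness bounds gradients of averaged functions, whereas the argument needs a bound on the
vertex differences `χ (x 0) - χ y`.  In even degree it follows by adding the gradients along `x` and
along its cyclic rotation (`grad_even`).  In odd degree the gradient of the constant function `1` is
`1`, so the hypothesis on large plateaus bounds the total weight of the cofaces (`grad_odd`),
which suffices once `χ` is truncated to `[0, 1]`.  Extending the truncated `χ` to simplices by the
minimum of its vertex values gives cut-offs whose commutators with `d` and `δ` tend strongly to
zero over `Λ` (`tendsto_commutator_d`, `tendsto_commutator_delta`), so that the truncations of `P u`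
converge in the graph norm of `D_in` (`exists_inner_approx`).

The sums of the two approximations converge to `u`; applying `D` to them, the diagonal blocks
converge by construction and the off-diagonal ones by boundedness.
-/

open Filter Function Set
open scoped Topology

namespace DiscreteHodge

/-- A weighted graph `G = (V, m₀, m₁)`: a strictly positive vertex weight `m₀`, a symmetric
nonnegative edge weight `m₁`; `x, y` are neighbors iff `m₁ x y > 0`; `G` is locally finite. -/
structure WG (V : Type*) where
  m₀ : V → ℝ
  m₁ : V → V → ℝ
  m₀_pos : ∀ x, 0 < m₀ x
  m₁_nonneg : ∀ x y, 0 ≤ m₁ x y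
  m₁_symm : ∀ x y, m₁ x y = m₁ y x
  locFin : ∀ x, {y | 0 < m₁ x y}.Finite

variable {V : Type*}

/-- Adjacency in a weighted graph. -/
def WG.Adj (G : WG V) (x y : V) : Prop := 0 < G.m₁ x y

/-- A tuple of vertices is a simplex of the clique complex iff its vertices are pairwise
distinct and pairwise adjacent (span a complete subgraph). -/
def IsSimplex (G : WG V) {k : ℕ} (x : Fin k → V) : Prop :=
  Function.Injective x ∧ ∀ a b : Fin k, a ≠ b → G.Adj (x a) (x b)

/-- The family of simplex weights `(m_i)` of the weighted oriented clique `n`-simplicial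
complex over `G`: `m i` is defined on `(i+1)`-tuples, extends `m₀, m₁`, is strictly positive
exactly on simplices (for `1 ≤ i ≤ n`) and is invariant under permutations of its arguments. -/
structure CliqueWeights (G : WG V) (n : ℕ) where
  m : ∀ i : ℕ, (Fin (i + 1) → V) → ℝ
  nonneg : ∀ i x, 0 ≤ m i x
  m_zero : ∀ x : Fin 1 → V, m 0 x = G.m₀ (x 0)
  m_one : ∀ x : Fin 2 → V, m 1 x = G.m₁ (x 0) (x 1)
  pos_iff : ∀ i, 1 ≤ i → i ≤ n → ∀ x : Fin (i + 1) → V, (0 < m i x ↔ IsSimplex G x)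
  perm_inv : ∀ i, 1 ≤ i → i ≤ n → ∀ (x : Fin (i + 1) → V) (σ : Equiv.Perm (Fin (i + 1))),
      m i (x ∘ σ) = m i x

/-- An alternating function on tuples. -/
def IsAlternating {k : ℕ} (f : (Fin k → V) → ℂ) : Prop :=
  ∀ (x : Fin k → V) (σ : Equiv.Perm (Fin k)),
    f (x ∘ σ) = ((Equiv.Perm.sign σ : ℤ) : ℂ) * f x

/-- An `i`-cochain: an alternating function on `(i+1)`-tuples supported on oriented
`i`-simplices.  Elements of `C_c^i(V)` are cochains with finite support. -/
def IsCochain (G : WG V) (i : ℕ) (f : (Fin (i + 1) → V) → ℂ) : Prop :=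
  IsAlternating f ∧ ∀ x, ¬ IsSimplex G x → f x = 0

/-- Coboundary operator on the part of the complex lying over `Λ ⊆ V`:
`d_i f(x₁,…,x_{i+1}) = Σ_j (−1)^{j+1} f(x₁,…,x̂_j,…,x_{i+1})` on simplices with all
vertices in `Λ`, and `0` elsewhere. -/
noncomputable def dOn (G : WG V) (Λ : Set V) (i : ℕ) (f : (Fin (i + 1) → V) → ℂ) :
    (Fin (i + 2) → V) → ℂ :=
  Set.indicator {x | IsSimplex G x ∧ ∀ j, x j ∈ Λ}
    (fun x => ∑ j : Fin (i + 2), (-1 : ℂ) ^ (j : ℕ) * f (x ∘ j.succAbove))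

/-- The coboundary operator `d_{i+1} : C_c^i(V) → C_c^{i+1}(V)` (paper index `i+1`). -/
noncomputable def d (G : WG V) (i : ℕ) (f : (Fin (i + 1) → V) → ℂ) :
    (Fin (i + 2) → V) → ℂ :=
  dOn G Set.univ i f

/-- Codifferential on the part of the complex lying over `Λ ⊆ V`:
`δ g(x₁,…,x_{i+1}) = (1/m_i(x)) Σ_{y ∈ F(x) ∩ Λ} m_{i+1}(x,y) g(x,y)`; vertices outside the
common-neighbor set `F(x)` contribute `0` since `m_{i+1}` vanishes on non-simplices. -/
noncomputable def deltaOn (G : WG V) {n : ℕ} (W : CliqueWeights G n) (Λ : Set V) (i : ℕ)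
    (g : (Fin (i + 2) → V) → ℂ) : (Fin (i + 1) → V) → ℂ :=
  fun x => ((W.m i x : ℝ) : ℂ)⁻¹ *
    ∑' y : V, Set.indicator Λ
      (fun y => ((W.m (i + 1) (Fin.snoc x y) : ℝ) : ℂ) * g (Fin.snoc x y)) y

/-- The codifferential `δ_{i+1} : C_c^{i+1}(V) → C_c^i(V)` (paper index `i+1`). -/
noncomputable def delta (G : WG V) {n : ℕ} (W : CliqueWeights G n) (i : ℕ)
    (g : (Fin (i + 2) → V) → ℂ) : (Fin (i + 1) → V) → ℂ :=
  deltaOn G W Set.univ i g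

/-- Squared `ℓ²(m_i)` norm: `‖f‖² = (1/(i+1)!) Σ_σ m_i(σ) |f(σ)|²`. -/
noncomputable def norm2 {G : WG V} {n : ℕ} (W : CliqueWeights G n) (i : ℕ)
    (f : (Fin (i + 1) → V) → ℂ) : ℝ :=
  ((Nat.factorial (i + 1) : ℝ))⁻¹ * ∑' x : Fin (i + 1) → V, W.m i x * ‖f x‖ ^ 2

/-- Membership in `ℓ²(m_i)`. -/
def MemL2 {G : WG V} {n : ℕ} (W : CliqueWeights G n) (i : ℕ)
    (f : (Fin (i + 1) → V) → ℂ) : Prop :=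
  Summable (fun x : Fin (i + 1) → V => W.m i x * ‖f x‖ ^ 2)

/-- The `ℓ²(m_i)` inner product `⟨f,g⟩ = (1/(i+1)!) Σ_σ m_i(σ) f(σ) conj (g σ)`. -/
noncomputable def inner2 {G : WG V} {n : ℕ} (W : CliqueWeights G n) (i : ℕ)
    (f g : (Fin (i + 1) → V) → ℂ) : ℂ :=
  ((Nat.factorial (i + 1) : ℂ))⁻¹ *
    ∑' x : Fin (i + 1) → V, ((W.m i x : ℝ) : ℂ) * f x * (starRingEnd ℂ) (g x)

/-- Convergence `u k → f` in `ℓ²(m_i)`. -/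
def TendstoL2 {G : WG V} {n : ℕ} (W : CliqueWeights G n) (i : ℕ)
    (u : ℕ → (Fin (i + 1) → V) → ℂ) (f : (Fin (i + 1) → V) → ℂ) : Prop :=
  Tendsto (fun k => norm2 W i (fun x => u k x - f x)) atTop (𝓝 0)

/-- The Gauss–Bonnet operator `D = d + δ` acting componentwise on cochain families:
`(DF)_i = d_i f_{i-1} + δ_{i+1} f_{i+1}` with the end terms absent. -/
noncomputable def Dop (G : WG V) {n : ℕ} (W : CliqueWeights G n)
    (f : ∀ i : ℕ, (Fin (i + 1) → V) → ℂ) : ∀ i : ℕ, (Fin (i + 1) → V) → ℂ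
  | 0 => delta G W 0 (f 1)
  | (i + 1) =>
      if i + 1 ≤ n then (fun x => d G i (f i) x + delta G W (i + 1) (f (i + 2)) x) else 0

/-- The Laplacian block `L_i = δ_{i+1} d_{i+1} + d_i δ_i` on `C_c^i(V)`
(the `d_iδ_i` term absent for `i = 0`, the `δ_{i+1}d_{i+1}` term absent for `i = n`). -/
noncomputable def Lblock (G : WG V) {n : ℕ} (W : CliqueWeights G n) :
    ∀ i : ℕ, ((Fin (i + 1) → V) → ℂ) → (Fin (i + 1) → V) → ℂ
  | 0 => fun g => if 1 ≤ n then delta G W 0 (d G 0 g) else 0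
  | (i + 1) => fun g x =>
      (if i + 2 ≤ n then delta G W (i + 1) (d G (i + 1) g) x else 0)
        + d G i (delta G W i g) x

/-- A family `(f_0, …, f_n)` of cochains, one in each degree (encoded with `f i = 0`
for `i > n`). -/
def CochainFamily (G : WG V) (n : ℕ) (u : ∀ i : ℕ, (Fin (i + 1) → V) → ℂ) : Prop :=
  (∀ i, IsCochain G i (u i)) ∧ ∀ i, n < i → u i = 0

/-- All components finitely supported, i.e. membership in `⊕_{i=0}^n C_c^i(V)`. -/
def FinSuppFamily (u : ∀ i : ℕ, (Fin (i + 1) → V) → ℂ) : Prop :=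
  ∀ i, (Function.support (u i)).Finite

/-- Membership in `H = ⊕_{i=0}^n ℓ²(m_i)`. -/
def MemL2Family {G : WG V} {n : ℕ} (W : CliqueWeights G n)
    (u : ∀ i : ℕ, (Fin (i + 1) → V) → ℂ) : Prop :=
  ∀ i, MemL2 W i (u i)

/-- Componentwise `ℓ²` convergence of cochain families, i.e. convergence in `H`. -/
def TendstoL2Family {G : WG V} {n : ℕ} (W : CliqueWeights G n)
    (u : ℕ → ∀ i : ℕ, (Fin (i + 1) → V) → ℂ)
    (f : ∀ i : ℕ, (Fin (i + 1) → V) → ℂ) : Prop :=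
  ∀ i, TendstoL2 W i (fun k => u k i) (f i)

/-- Extension of a vertex function to tuples by averaging:
`χ̃(x_0,…,x_{k-1}) = (1/k) Σ_j χ(x_j)`. -/
noncomputable def avg (χ : V → ℝ) {k : ℕ} (x : Fin k → V) : ℂ :=
  (k : ℂ)⁻¹ * ∑ j : Fin k, (χ (x j) : ℂ)

/-- The discrete gradient energy of a vertex function `χ` at a `j`-simplex `x` (relative to
the region `Λ`): `(1/m_j(x)) Σ_{y ∈ F(x) ∩ Λ} m_{j+1}(x,y) |d_{j+1} χ̃ (x,y)|²`. -/
noncomputable def gradEnergyOn {G : WG V} {n : ℕ} (W : CliqueWeights G n) (Λ : Set V)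
    (j : ℕ) (χ : V → ℝ) (x : Fin (j + 1) → V) : ℝ :=
  (W.m j x)⁻¹ * ∑' y : V, Set.indicator Λ
    (fun y => W.m (j + 1) (Fin.snoc x y) *
      ‖dOn G Λ j (fun σ : Fin (j + 1) → V => avg χ σ) (Fin.snoc x y)‖ ^ 2) y

/-- `(O, χ)` is a system of plateau cut-offs witnessing global `χ`-completeness of the part
of the complex lying over `Λ`: `(O k)` is an increasing exhaustion of `Λ` by finite sets,
the `χ k` are finitely supported vertex functions whose averages equal `1` on every simplex
with all vertices in `O k`, with a uniform discrete-gradient energy bound in all degrees. -/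
def IsChiWitnessOn {G : WG V} {n : ℕ} (W : CliqueWeights G n) (Λ : Set V)
    (O : ℕ → Set V) (χ : ℕ → V → ℝ) : Prop :=
  (∀ k, (O k).Finite) ∧ Monotone O ∧ (∀ k, O k ⊆ Λ) ∧ (⋃ k, O k) = Λ ∧
  (∀ k, (Function.support (χ k)).Finite) ∧
  (∀ k (i : ℕ), i ≤ n → ∀ x : Fin (i + 1) → V, IsSimplex G x → (∀ j, x j ∈ Λ) →
      (∀ j, x j ∈ O k) → avg (χ k) x = 1) ∧
  ∃ C > 0, ∀ k (j : ℕ), j + 1 ≤ n → ∀ x : Fin (j + 1) → V,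
      IsSimplex G x → (∀ a, x a ∈ Λ) → gradEnergyOn W Λ j (χ k) x ≤ C

/-- Global `χ`-completeness of the restriction of the complex to `Λ`. -/
def GloballyChiCompleteOn {G : WG V} {n : ℕ} (W : CliqueWeights G n) (Λ : Set V) : Prop :=
  ∃ O χ, IsChiWitnessOn W Λ O χ

/-- Global `χ`-completeness of the weighted clique `n`-simplicial complex. -/
def GloballyChiComplete {G : WG V} {n : ℕ} (W : CliqueWeights G n) : Prop :=
  GloballyChiCompleteOn W Set.univ

/-- `(O, χ)` witnesses local `χ`-completeness at level `ℓ`: cut-offs are required only on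
`ℓ`-simplices, and the energy bound only in degree `ℓ`. -/
def IsChiWitnessAtLevel {G : WG V} {n : ℕ} (W : CliqueWeights G n) (ℓ : ℕ)
    (O : ℕ → Set V) (χ : ℕ → V → ℝ) : Prop :=
  (∀ k, (O k).Finite) ∧ Monotone O ∧ (⋃ k, O k) = Set.univ ∧
  (∀ k, (Function.support (χ k)).Finite) ∧
  (∀ k (x : Fin (ℓ + 1) → V), IsSimplex G x → (∀ j, x j ∈ O k) → avg (χ k) x = 1) ∧
  ∃ C > 0, ∀ k (j : ℕ), j + 1 = ℓ → ∀ x : Fin (j + 1) → V,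
      IsSimplex G x → gradEnergyOn W Set.univ j (χ k) x ≤ C

/-- Local `χ`-completeness at level `ℓ`. -/
def LocallyChiCompleteAtLevel {G : WG V} {n : ℕ} (W : CliqueWeights G n) (ℓ : ℕ) : Prop :=
  ∃ O χ, IsChiWitnessAtLevel W ℓ O χ

/-- Essential self-adjointness of the Gauss–Bonnet operator `D = d + δ`, phrased as
`D_min = D_max`: every `u` in the maximal domain (i.e. `u ∈ H` with the pointwise-defined
`Du ∈ H`) is approximated, in the graph norm of `D`, by finitely supported cochain
families (elements of `⊕_{i=0}^n C_c^i(V)`). -/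
def ESA_D {G : WG V} {n : ℕ} (W : CliqueWeights G n) : Prop :=
  ∀ u : ∀ i : ℕ, (Fin (i + 1) → V) → ℂ,
    CochainFamily G n u → MemL2Family W u → MemL2Family W (Dop G W u) →
    ∃ uk : ℕ → ∀ i : ℕ, (Fin (i + 1) → V) → ℂ,
      (∀ k, CochainFamily G n (uk k) ∧ FinSuppFamily (uk k)) ∧
      TendstoL2Family W uk u ∧
      TendstoL2Family W (fun k => Dop G W (uk k)) (Dop G W u)

/-- Essential self-adjointness of the Hodge Laplacian `L = D²`, phrased as `L_min = L_max`
via graph-norm approximation from `⊕_{i=0}^n C_c^i(V)`. -/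
def ESA_L {G : WG V} {n : ℕ} (W : CliqueWeights G n) : Prop :=
  ∀ u : ∀ i : ℕ, (Fin (i + 1) → V) → ℂ,
    CochainFamily G n u → MemL2Family W u → MemL2Family W (Dop G W (Dop G W u)) →
    ∃ uk : ℕ → ∀ i : ℕ, (Fin (i + 1) → V) → ℂ,
      (∀ k, CochainFamily G n (uk k) ∧ FinSuppFamily (uk k)) ∧
      TendstoL2Family W uk u ∧
      TendstoL2Family W (fun k => Dop G W (Dop G W (uk k))) (Dop G W (Dop G W u))

/-- Orthogonal projection of `H` onto `H_in`, the subspace spanned by simplices with all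
vertices in `Λ`. -/
noncomputable def projIn {V : Type*} (Λ : Set V) (u : ∀ i : ℕ, (Fin (i + 1) → V) → ℂ) :
    ∀ i : ℕ, (Fin (i + 1) → V) → ℂ :=
  fun i => Set.indicator {x | ∀ j, x j ∈ Λ} (u i)

/-- Orthogonal projection of `H` onto `H_out = H_in^⊥`, spanned by simplices with at least
one vertex outside `Λ`. -/
noncomputable def projOut {V : Type*} (Λ : Set V) (u : ∀ i : ℕ, (Fin (i + 1) → V) → ℂ) :
    ∀ i : ℕ, (Fin (i + 1) → V) → ℂ :=
  fun i x => u i x - projIn Λ u i x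

/-- The diagonal block `D_in = P D P` of the Gauss–Bonnet operator. -/
noncomputable def Din {V : Type*} (G : WG V) {n : ℕ} (W : CliqueWeights G n) (Λ : Set V)
    (u : ∀ i : ℕ, (Fin (i + 1) → V) → ℂ) : ∀ i : ℕ, (Fin (i + 1) → V) → ℂ :=
  projIn Λ (Dop G W (projIn Λ u))

/-- The diagonal block `D_out = Q D Q` of the Gauss–Bonnet operator. -/
noncomputable def Dout {V : Type*} (G : WG V) {n : ℕ} (W : CliqueWeights G n) (Λ : Set V)
    (u : ∀ i : ℕ, (Fin (i + 1) → V) → ℂ) : ∀ i : ℕ, (Fin (i + 1) → V) → ℂ :=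
  projOut Λ (Dop G W (projOut Λ u))

/-- The coupling operator `C = P D Q` between `Λ` and `V \ Λ`. -/
noncomputable def Coup {V : Type*} (G : WG V) {n : ℕ} (W : CliqueWeights G n) (Λ : Set V)
    (u : ∀ i : ℕ, (Fin (i + 1) → V) → ℂ) : ∀ i : ℕ, (Fin (i + 1) → V) → ℂ :=
  projIn Λ (Dop G W (projOut Λ u))

/-- The squared norm of `H = ⊕_{i=0}^n ℓ²(m_i)`. -/
noncomputable def normH {V : Type*} {G : WG V} {n : ℕ} (W : CliqueWeights G n)
    (u : ∀ i : ℕ, (Fin (i + 1) → V) → ℂ) : ℝ :=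
  ∑ i ∈ Finset.range (n + 1), norm2 W i (u i)

/-! ### Permutations of tuples -/

theorem IsSimplex.comp_injective {G : WG V} {k l : ℕ} {x : Fin k → V} (hx : IsSimplex G x)
    {e : Fin l → Fin k} (he : Function.Injective e) : IsSimplex G (x ∘ e) :=
  ⟨hx.1.comp he, fun _ _ hab => hx.2 _ _ (he.ne hab)⟩

theorem isSimplex_comp_perm {G : WG V} {k : ℕ} (x : Fin k → V) (σ : Equiv.Perm (Fin k)) :
    IsSimplex G (x ∘ σ) ↔ IsSimplex G x := by
  refine ⟨fun h => ?_, fun h => h.comp_injective σ.injective⟩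
  have := h.comp_injective (σ⁻¹).injective
  simpa [Function.comp_def] using this

theorem isSimplex_zero (G : WG V) (x : Fin 1 → V) : IsSimplex G x :=
  ⟨Function.injective_of_subsingleton x, fun a b hab => absurd (Subsingleton.elim a b) hab⟩

theorem CliqueWeights.m_pos_iff {G : WG V} {n : ℕ} (W : CliqueWeights G n) {i : ℕ} (hi : i ≤ n)
    (x : Fin (i + 1) → V) : 0 < W.m i x ↔ IsSimplex G x := by
  rcases i with _ | i
  · exact ⟨fun _ => isSimplex_zero G x, fun _ => by rw [W.m_zero]; exact G.m₀_pos _⟩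
  · exact W.pos_iff _ (by omega) hi x

theorem CliqueWeights.m_perm {G : WG V} {n : ℕ} (W : CliqueWeights G n) {i : ℕ} (hi : i ≤ n)
    (x : Fin (i + 1) → V) (σ : Equiv.Perm (Fin (i + 1))) : W.m i (x ∘ σ) = W.m i x := by
  rcases i with _ | i
  · exact congrArg (W.m 0) (funext fun a => congrArg x (@Subsingleton.elim (Fin 1) _ _ _))
  · exact W.perm_inv _ (by omega) hi x σ

/-- Moving the vertex `y` from position `p` to the last one is a permutation of known sign. -/
theorem insertNth_eq_snoc_comp {k : ℕ} (p : Fin (k + 1)) (y : V) (x : Fin k → V) :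
    ∃ τ : Equiv.Perm (Fin (k + 1)),
      (p.insertNth y x : Fin (k + 1) → V) = (Fin.snoc x y : Fin (k + 1) → V) ∘ τ ∧
      ((Equiv.Perm.sign τ : ℤ) : ℂ) = (-1) ^ (p : ℕ) * (-1) ^ k := by
  refine ⟨(Fin.last k).cycleRange.symm * p.cycleRange, ?_, ?_⟩
  · rw [← Fin.insertNth_last', Equiv.Perm.coe_mul, ← Function.comp_assoc,
      Fin.insertNth_comp_cycleRange_symm, Fin.cons_comp_cycleRange]
  · have h : Equiv.Perm.sign ((Fin.last k).cycleRange.symm) = (-1) ^ k := by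
      rw [Equiv.Perm.sign_symm, Fin.sign_cycleRange]; simp
    rw [Equiv.Perm.sign_mul, h, Fin.sign_cycleRange]
    push_cast
    ring

theorem CliqueWeights.m_insertNth {G : WG V} {n : ℕ} (W : CliqueWeights G n) {i : ℕ}
    (hi : i + 1 ≤ n) (p : Fin (i + 2)) (y : V) (x : Fin (i + 1) → V) :
    W.m (i + 1) (p.insertNth y x : Fin (i + 2) → V) = W.m (i + 1) (Fin.snoc x y) := by
  obtain ⟨τ, h, -⟩ := insertNth_eq_snoc_comp p y x
  rw [h, W.m_perm hi]

theorem IsAlternating.insertNth {k : ℕ} {g : (Fin (k + 1) → V) → ℂ} (hg : IsAlternating g)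
    (p : Fin (k + 1)) (y : V) (x : Fin k → V) :
    g (p.insertNth y x : Fin (k + 1) → V) = (-1) ^ (p : ℕ) * (-1) ^ k * g (Fin.snoc x y) := by
  obtain ⟨τ, h, hs⟩ := insertNth_eq_snoc_comp p y x
  rw [h, hg, hs]

/-- Extending a permutation of the first `k` positions by the identity in the last one. -/
theorem snoc_comp_perm {k : ℕ} (σ : Equiv.Perm (Fin k)) (x : Fin k → V) (y : V) :
    ∃ τ : Equiv.Perm (Fin (k + 1)),
      (Fin.snoc (x ∘ σ) y : Fin (k + 1) → V) = (Fin.snoc x y : Fin (k + 1) → V) ∘ τ := by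
  refine ⟨(finSuccEquivLast.trans (Equiv.optionCongr σ)).trans finSuccEquivLast.symm, ?_⟩
  funext a
  refine Fin.lastCases ?_ (fun b => ?_) a <;> simp

/-- The face of `z ∘ σ` opposite to position `p` is, up to a permutation of known sign, the face
of `z` opposite to position `σ p`. -/
theorem perm_comp_succAbove {k : ℕ} (σ : Equiv.Perm (Fin (k + 1))) (p : Fin (k + 1)) :
    ∃ τ : Equiv.Perm (Fin k), σ ∘ p.succAbove = (σ p).succAbove ∘ τ ∧
      (-1 : ℂ) ^ (p : ℕ) * ((Equiv.Perm.sign τ : ℤ) : ℂ)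
        = ((Equiv.Perm.sign σ : ℤ) : ℂ) * (-1) ^ ((σ p : Fin (k + 1)) : ℕ) := by
  -- conjugating by cycles that bring `p` and `σ p` to position `0` gives a permutation fixing `0`
  set ρ : Equiv.Perm (Fin (k + 1)) := (σ p).cycleRange * σ * p.cycleRange.symm with hρ
  have h0 : ρ 0 = 0 := by simp [hρ]
  obtain ⟨⟨q, τ⟩, hτ⟩ := Equiv.Perm.decomposeFin.symm.surjective ρ
  have hq : q = 0 := by
    rw [← h0, ← hτ, Equiv.Perm.decomposeFin_symm_apply_zero]
  subst hq
  refine ⟨τ, ?_, ?_⟩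
  · funext j
    have h := Equiv.Perm.decomposeFin_symm_apply_succ τ 0 j
    rw [hτ] at h
    simp only [hρ, Equiv.Perm.coe_mul, Function.comp_apply, Fin.cycleRange_symm_succ,
      Equiv.swap_self, Equiv.refl_apply] at h
    have h' := congrArg (σ p).cycleRange.symm h
    simpa using h'
  · have h := Equiv.Perm.decomposeFin.symm_sign 0 τ
    rw [hτ] at h
    simp only [if_true, one_mul] at h
    rw [← h, hρ]
    simp only [Equiv.Perm.sign_mul, Equiv.Perm.sign_symm, Fin.sign_cycleRange]
    push_cast
    have : ((-1 : ℂ) ^ (p : ℕ)) * (-1) ^ (p : ℕ) = 1 := by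
      rw [← mul_pow]; simp
    linear_combination ((-1 : ℂ) ^ ((σ p : Fin (k + 1)) : ℕ) * ((Equiv.Perm.sign σ : ℤ) : ℂ)) * this

theorem d_isAlternating (G : WG V) (i : ℕ) {f : (Fin (i + 1) → V) → ℂ} (hf : IsAlternating f) :
    IsAlternating (d G i f) := by
  intro x σ
  by_cases hx : IsSimplex G x
  · have hx' : IsSimplex G (x ∘ σ) := (isSimplex_comp_perm x σ).2 hx
    simp only [d, dOn, Set.mem_univ, implies_true, and_true]
    rw [Set.indicator_of_mem (show x ∘ σ ∈ {x | IsSimplex G x} from hx'),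
      Set.indicator_of_mem (show x ∈ {x | IsSimplex G x} from hx), Finset.mul_sum,
      ← Equiv.sum_comp σ (fun p => ((Equiv.Perm.sign σ : ℤ) : ℂ) *
        ((-1) ^ (p : ℕ) * f (x ∘ p.succAbove)))]
    refine Finset.sum_congr rfl fun p _ => ?_
    obtain ⟨τ, h, hs⟩ := perm_comp_succAbove σ p
    rw [Function.comp_assoc, h, ← Function.comp_assoc, hf, ← mul_assoc, hs, mul_assoc]
  · have hx' : ¬ IsSimplex G (x ∘ σ) := fun h => hx ((isSimplex_comp_perm x σ).1 h)
    simp [d, dOn, hx, hx']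

/-! ### Squared norms with values in `[0, ∞]` -/

/-- The squared norm `Σ_x m_i(x) |f(x)|²` (without the factor `1/(i+1)!`), as an element of
`[0, ∞]`, so that no summability has to be tracked. -/
noncomputable def energy {G : WG V} {n : ℕ} (W : CliqueWeights G n) (i : ℕ)
    (f : (Fin (i + 1) → V) → ℂ) : ENNReal :=
  ∑' x : Fin (i + 1) → V, ENNReal.ofReal (W.m i x * ‖f x‖ ^ 2)

section energy

variable {G : WG V} {n : ℕ} (W : CliqueWeights G n) {i : ℕ}

theorem memL2_iff (f : (Fin (i + 1) → V) → ℂ) : MemL2 W i f ↔ energy W i f ≠ ⊤ := by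
  refine ⟨fun h => ?_, fun h => ?_⟩
  · exact h.tsum_ofReal_ne_top
  · have := ENNReal.summable_toReal h
    refine this.congr fun x => ?_
    rw [ENNReal.toReal_ofReal (mul_nonneg (W.nonneg _ _) (by positivity))]

theorem norm2_eq (f : (Fin (i + 1) → V) → ℂ) :
    norm2 W i f = ((Nat.factorial (i + 1) : ℝ))⁻¹ * (energy W i f).toReal := by
  rw [norm2, energy, ENNReal.tsum_toReal_eq (fun _ => ENNReal.ofReal_ne_top)]
  congr 2
  funext x
  rw [ENNReal.toReal_ofReal (mul_nonneg (W.nonneg _ _) (by positivity))]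

theorem norm2_nonneg (f : (Fin (i + 1) → V) → ℂ) : 0 ≤ norm2 W i f := by
  rw [norm2_eq]; positivity

theorem energy_mono {f g : (Fin (i + 1) → V) → ℂ} (h : ∀ x, ‖f x‖ ≤ ‖g x‖) :
    energy W i f ≤ energy W i g := by
  refine ENNReal.tsum_le_tsum fun x => ENNReal.ofReal_le_ofReal ?_
  have := h x
  have := W.nonneg i x
  gcongr

theorem energy_zero : energy W i (0 : (Fin (i + 1) → V) → ℂ) = 0 := by
  simp [energy]

theorem energy_neg_sub (f g : (Fin (i + 1) → V) → ℂ) :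
    energy W i (fun x => f x - g x) = energy W i (fun x => g x - f x) := by
  simp [energy, norm_sub_rev]

theorem energy_add_le (f g : (Fin (i + 1) → V) → ℂ) :
    energy W i (fun x => f x + g x) ≤ 2 * (energy W i f + energy W i g) := by
  rw [energy, energy, energy, ← ENNReal.tsum_add, ← ENNReal.tsum_mul_left]
  refine ENNReal.tsum_le_tsum fun x => ?_
  have hm := W.nonneg i x
  rw [← ENNReal.ofReal_add (by positivity) (by positivity),
    show (2 : ENNReal) = ENNReal.ofReal 2 by simp, ← ENNReal.ofReal_mul (by norm_num)]
  refine ENNReal.ofReal_le_ofReal ?_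
  have h1 : ‖f x + g x‖ ^ 2 ≤ 2 * (‖f x‖ ^ 2 + ‖g x‖ ^ 2) := by
    have := norm_add_le (f x) (g x)
    have := norm_nonneg (f x + g x)
    nlinarith [sq_nonneg (‖f x‖ - ‖g x‖)]
  nlinarith

theorem energy_sub_le (f g : (Fin (i + 1) → V) → ℂ) :
    energy W i (fun x => f x - g x) ≤ 2 * (energy W i f + energy W i g) := by
  have h := energy_add_le W f (fun x => - g x)
  simpa [sub_eq_add_neg, energy] using h

theorem energy_add_ne_top {f g : (Fin (i + 1) → V) → ℂ} (hf : energy W i f ≠ ⊤)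
    (hg : energy W i g ≠ ⊤) : energy W i (fun x => f x + g x) ≠ ⊤ :=
  ne_top_of_le_ne_top (by finiteness) (energy_add_le W f g)

theorem energy_sub_ne_top {f g : (Fin (i + 1) → V) → ℂ} (hf : energy W i f ≠ ⊤)
    (hg : energy W i g ≠ ⊤) : energy W i (fun x => f x - g x) ≠ ⊤ :=
  ne_top_of_le_ne_top (by finiteness) (energy_sub_le W f g)

theorem energy_ne_top_of_finite {f : (Fin (i + 1) → V) → ℂ} (hf : (Function.support f).Finite) :
    energy W i f ≠ ⊤ := by
  rw [energy, tsum_eq_sum (s := hf.toFinset)]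
  · exact ENNReal.sum_ne_top.2 fun _ _ => ENNReal.ofReal_ne_top
  · intro x hx
    have : f x = 0 := by simpa using hx
    simp [this]

theorem energy_indicator_le (s : Set (Fin (i + 1) → V)) (f : (Fin (i + 1) → V) → ℂ) :
    energy W i (s.indicator f) ≤ energy W i f :=
  energy_mono W fun _ => norm_indicator_le_norm_self _ _

theorem tendstoL2_of_energy {u : ℕ → (Fin (i + 1) → V) → ℂ} {f : (Fin (i + 1) → V) → ℂ}
    (h : Tendsto (fun k => energy W i (fun x => u k x - f x)) atTop (𝓝 0)) :
    TendstoL2 W i u f := by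
  unfold TendstoL2
  simp only [norm2_eq]
  have h1 := ((ENNReal.tendsto_toReal ENNReal.zero_ne_top).comp h).const_mul
    ((Nat.factorial (i + 1) : ℝ))⁻¹
  simpa using h1

/-- The converse of `tendstoL2_of_energy` needs the differences to be square summable, since
`norm2` takes the value `0` on functions that are not. -/
theorem TendstoL2.energy {u : ℕ → (Fin (i + 1) → V) → ℂ} {f : (Fin (i + 1) → V) → ℂ}
    (h : TendstoL2 W i u f) (hu : ∀ k, energy W i (u k) ≠ ⊤) (hf : energy W i f ≠ ⊤) :
    Tendsto (fun k => energy W i (fun x => u k x - f x)) atTop (𝓝 0) := by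
  have h0 : ((Nat.factorial (i + 1) : ℝ)) ≠ 0 := by positivity
  have h1 := h.const_mul ((Nat.factorial (i + 1) : ℝ))
  simp only [norm2_eq, mul_inv_cancel_left₀ h0, mul_zero] at h1
  have h2 := ENNReal.tendsto_ofReal h1
  simp only [ENNReal.ofReal_zero] at h2
  refine h2.congr fun k => ?_
  rw [ENNReal.ofReal_toReal (energy_sub_ne_top W (hu k) hf)]

end energy

theorem tendsto_zero_of_le_two_mul_add {a b c : ℕ → ENNReal} (hb : Tendsto b atTop (𝓝 0))
    (hc : Tendsto c atTop (𝓝 0)) (h : ∀ k, a k ≤ 2 * (b k + c k)) :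
    Tendsto a atTop (𝓝 0) := by
  have h1 : Tendsto (fun k => 2 * (b k + c k)) atTop (𝓝 (2 * (0 + 0))) :=
    ENNReal.Tendsto.const_mul (hb.add hc) (Or.inr (by simp))
  simp only [add_zero, mul_zero] at h1
  exact tendsto_of_tendsto_of_tendsto_of_le_of_le tendsto_const_nhds h1 (fun _ => zero_le) h

theorem tendsto_zero_of_le_const_mul {a b : ℕ → ENNReal} {K : ENNReal} (hK : K ≠ ⊤)
    (hb : Tendsto b atTop (𝓝 0)) (h : ∀ k, a k ≤ K * b k) : Tendsto a atTop (𝓝 0) := by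
  have h1 : Tendsto (fun k => K * b k) atTop (𝓝 (K * 0)) :=
    ENNReal.Tendsto.const_mul hb (Or.inr hK)
  simp only [mul_zero] at h1
  exact tendsto_of_tendsto_of_tendsto_of_le_of_le tendsto_const_nhds h1 (fun _ => zero_le) h

/-- Dominated convergence for series in `[0, ∞]` whose terms eventually vanish. -/
theorem tendsto_tsum_zero_of_dominated {T : Type*} {a : ℕ → T → ENNReal} {b : T → ENNReal}
    (hb : ∑' x, b x ≠ ⊤) (hab : ∀ k x, a k x ≤ b x) (h0 : ∀ x, ∀ᶠ k in atTop, a k x = 0) :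
    Tendsto (fun k => ∑' x, a k x) atTop (𝓝 0) := by
  rw [ENNReal.tendsto_nhds_zero]
  intro ε hε
  obtain ⟨s, hs⟩ := ((ENNReal.tendsto_nhds_zero.1
    (ENNReal.tendsto_tsum_compl_atTop_zero hb)) ε hε).exists
  have h1 : ∀ᶠ k in atTop, ∀ x ∈ s, a k x = 0 :=
    (Filter.eventually_all_finset s).2 fun x _ => h0 x
  filter_upwards [h1] with k hk
  refine le_trans ?_ hs
  have h2 : ∑' x, a k x = ∑' x : {x // x ∉ s}, a k x := by
    refine (tsum_subtype_eq_of_support_subset (s := {x | x ∉ s}) ?_).symm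
    intro x hx hxs
    exact hx (hk x hxs)
  rw [h2]
  exact ENNReal.tsum_le_tsum fun x => hab k x

/-! ### Local formulas for `d` and `δ` -/

/-- The finite set of neighbors of a vertex. -/
noncomputable def nbr (G : WG V) (v : V) : Finset V := (G.locFin v).toFinset

section localFormulas

variable {G : WG V} {n : ℕ} (W : CliqueWeights G n) {i : ℕ}

theorem mem_nbr {v y : V} : y ∈ nbr G v ↔ G.Adj v y := by
  simp [nbr, WG.Adj]

theorem IsSimplex.mem_nbr_of_ne {k : ℕ} {x : Fin k → V} (hx : IsSimplex G x) {a b : Fin k}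
    (hab : a ≠ b) : x b ∈ nbr G (x a) :=
  mem_nbr.2 (hx.2 a b hab)

theorem mem_nbr_of_isSimplex_snoc {x : Fin (i + 1) → V} {y : V}
    (h : IsSimplex G (Fin.snoc x y : Fin (i + 2) → V)) : y ∈ nbr G (x 0) := by
  have h1 := h.mem_nbr_of_ne (a := Fin.castSucc 0) (b := Fin.last (i + 1))
    (Fin.castSucc_lt_last 0).ne
  simpa only [Fin.snoc_castSucc, Fin.snoc_last] using h1

theorem m_snoc_eq_zero (hi : i + 1 ≤ n) {x : Fin (i + 1) → V} {y : V} (hy : y ∉ nbr G (x 0)) :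
    W.m (i + 1) (Fin.snoc x y) = 0 := by
  by_contra h
  exact hy (mem_nbr_of_isSimplex_snoc
    ((W.m_pos_iff hi _).1 (lt_of_le_of_ne (W.nonneg _ _) (Ne.symm h))))

theorem delta_eq (hi : i + 1 ≤ n) (g : (Fin (i + 2) → V) → ℂ) (x : Fin (i + 1) → V) :
    delta G W i g x = ((W.m i x : ℝ) : ℂ)⁻¹ *
      ∑ y ∈ nbr G (x 0), ((W.m (i + 1) (Fin.snoc x y) : ℝ) : ℂ) * g (Fin.snoc x y) := by
  simp only [delta, deltaOn, Set.indicator_univ]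
  rw [tsum_eq_sum (s := nbr G (x 0))]
  intro y hy
  simp [m_snoc_eq_zero W hi hy]

theorem delta_zero (i : ℕ) : delta G W i (0 : (Fin (i + 2) → V) → ℂ) = 0 := by
  funext x; simp [delta, deltaOn]

theorem d_of_simplex (f : (Fin (i + 1) → V) → ℂ) {x : Fin (i + 2) → V} (hx : IsSimplex G x) :
    d G i f x = ∑ j : Fin (i + 2), (-1 : ℂ) ^ (j : ℕ) * f (x ∘ j.succAbove) := by
  simp [d, dOn, hx]

theorem d_of_not_simplex (f : (Fin (i + 1) → V) → ℂ) {x : Fin (i + 2) → V}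
    (hx : ¬ IsSimplex G x) : d G i f x = 0 := by
  simp [d, dOn, hx]

theorem d_zero (i : ℕ) : d G i (0 : (Fin (i + 1) → V) → ℂ) = 0 := by
  funext x
  by_cases hx : IsSimplex G x
  · simp [d_of_simplex _ hx]
  · simp [d_of_not_simplex _ hx]

theorem d_add (f g : (Fin (i + 1) → V) → ℂ) (x : Fin (i + 2) → V) :
    d G i (fun z => f z + g z) x = d G i f x + d G i g x := by
  by_cases hx : IsSimplex G x
  · simp only [d_of_simplex _ hx, mul_add, Finset.sum_add_distrib]
  · simp [d_of_not_simplex _ hx]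

theorem d_sub (f g : (Fin (i + 1) → V) → ℂ) (x : Fin (i + 2) → V) :
    d G i (fun z => f z - g z) x = d G i f x - d G i g x := by
  by_cases hx : IsSimplex G x
  · simp only [d_of_simplex _ hx, mul_sub, Finset.sum_sub_distrib]
  · simp [d_of_not_simplex _ hx]

theorem delta_add (hi : i + 1 ≤ n) (f g : (Fin (i + 2) → V) → ℂ) (x : Fin (i + 1) → V) :
    delta G W i (fun z => f z + g z) x = delta G W i f x + delta G W i g x := by
  simp only [delta_eq W hi, mul_add, Finset.sum_add_distrib]

theorem delta_sub (hi : i + 1 ≤ n) (f g : (Fin (i + 2) → V) → ℂ) (x : Fin (i + 1) → V) :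
    delta G W i (fun z => f z - g z) x = delta G W i f x - delta G W i g x := by
  simp only [delta_eq W hi, mul_sub, Finset.sum_sub_distrib]

theorem finite_support_delta (hi : i + 1 ≤ n) {g : (Fin (i + 2) → V) → ℂ}
    (hg : (Function.support g).Finite) : (Function.support (delta G W i g)).Finite := by
  refine (hg.image (fun z : Fin (i + 2) → V => fun a : Fin (i + 1) => z a.castSucc)).subset ?_
  intro x hx
  have h1 : ∑ y ∈ nbr G (x 0), ((W.m (i + 1) (Fin.snoc x y) : ℝ) : ℂ) * g (Fin.snoc x y) ≠ 0 := by
    intro h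
    apply hx
    rw [delta_eq W hi, h, mul_zero]
  obtain ⟨y, -, hy⟩ := Finset.exists_ne_zero_of_sum_ne_zero h1
  refine ⟨Fin.snoc x y, right_ne_zero_of_mul hy, ?_⟩
  funext a
  simp

theorem finite_support_d (G : WG V) {f : (Fin (i + 1) → V) → ℂ}
    (hf : (Function.support f).Finite) : (Function.support (d G i f)).Finite := by
  have hfin : (⋃ p : Fin (i + 2), ⋃ x ∈ Function.support f,
      (fun y => (p.insertNth y x : Fin (i + 2) → V)) '' (nbr G (x 0) : Set V)).Finite := by
    refine Set.finite_iUnion fun p => hf.biUnion fun x _ => ?_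
    exact (Finset.finite_toSet _).image _
  refine hfin.subset ?_
  intro z hz
  by_cases hs : IsSimplex G z
  · rw [Function.mem_support, d_of_simplex _ hs] at hz
    obtain ⟨p, -, hp⟩ := Finset.exists_ne_zero_of_sum_ne_zero hz
    have hp' := right_ne_zero_of_mul hp
    simp only [Set.mem_iUnion]
    refine ⟨p, z ∘ p.succAbove, hp', z p, ?_, ?_⟩
    · exact hs.mem_nbr_of_ne (Fin.succAbove_ne p 0)
    · exact Fin.insertNth_self_removeNth p z
  · exact absurd (d_of_not_simplex _ hs) hz

end localFormulas

/-! ### The blocks of the Gauss–Bonnet operator -/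

/-- Restriction of a function on tuples to the tuples with all entries in `Λ`. -/
noncomputable def pin (Λ : Set V) {k : ℕ} (f : (Fin k → V) → ℂ) : (Fin k → V) → ℂ :=
  Set.indicator {x | ∀ j, x j ∈ Λ} f

/-- Restriction of a function on tuples to the tuples with some entry outside `Λ`. -/
noncomputable def pout (Λ : Set V) {k : ℕ} (f : (Fin k → V) → ℂ) : (Fin k → V) → ℂ :=
  fun x => f x - pin Λ f x

/-- The degree `i + 1 → i` component `P δ Q` of the coupling operator. -/
noncomputable def cpl {G : WG V} {n : ℕ} (W : CliqueWeights G n) (Λ : Set V) (i : ℕ)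
    (g : (Fin (i + 2) → V) → ℂ) : (Fin (i + 1) → V) → ℂ :=
  pin Λ (delta G W i (pout Λ g))

/-- The degree `i → i + 1` component `Q d P` of the lower left block of `D`. -/
noncomputable def cst (G : WG V) (Λ : Set V) (i : ℕ) (f : (Fin (i + 1) → V) → ℂ) :
    (Fin (i + 2) → V) → ℂ :=
  pout Λ (d G i (pin Λ f))

section blocks

variable {G : WG V} {n : ℕ} (W : CliqueWeights G n) (Λ : Set V) {i k : ℕ}

theorem pin_of_mem (f : (Fin k → V) → ℂ) {x : Fin k → V} (hx : ∀ j, x j ∈ Λ) :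
    pin Λ f x = f x := Set.indicator_of_mem (s := {x : Fin k → V | ∀ j, x j ∈ Λ}) hx f

theorem pin_of_not_mem (f : (Fin k → V) → ℂ) {x : Fin k → V} (hx : ¬ ∀ j, x j ∈ Λ) :
    pin Λ f x = 0 := Set.indicator_of_notMem (s := {x : Fin k → V | ∀ j, x j ∈ Λ}) hx f

theorem pout_of_mem (f : (Fin k → V) → ℂ) {x : Fin k → V} (hx : ∀ j, x j ∈ Λ) :
    pout Λ f x = 0 := by simp [pout, pin_of_mem Λ f hx]

theorem pout_of_not_mem (f : (Fin k → V) → ℂ) {x : Fin k → V} (hx : ¬ ∀ j, x j ∈ Λ) :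
    pout Λ f x = f x := by simp [pout, pin_of_not_mem Λ f hx]

theorem pin_add_pout (f : (Fin k → V) → ℂ) (x : Fin k → V) : pin Λ f x + pout Λ f x = f x := by
  simp [pout]

theorem norm_pin_le (f : (Fin k → V) → ℂ) (x : Fin k → V) : ‖pin Λ f x‖ ≤ ‖f x‖ :=
  norm_indicator_le_norm_self _ _

theorem norm_pout_le (f : (Fin k → V) → ℂ) (x : Fin k → V) : ‖pout Λ f x‖ ≤ ‖f x‖ := by
  by_cases hx : ∀ j, x j ∈ Λ
  · simp [pout_of_mem Λ f hx]
  · simp [pout_of_not_mem Λ f hx]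

theorem pin_zero : pin Λ (0 : (Fin k → V) → ℂ) = 0 := Set.indicator_zero' _

theorem pout_zero : pout Λ (0 : (Fin k → V) → ℂ) = 0 := by
  funext x; simp [pout, pin_zero]

theorem pin_sub (f g : (Fin k → V) → ℂ) (x : Fin k → V) :
    pin Λ (fun z => f z - g z) x = pin Λ f x - pin Λ g x := by
  by_cases hx : ∀ j, x j ∈ Λ
  · simp [pin_of_mem Λ _ hx]
  · simp [pin_of_not_mem Λ _ hx]

theorem pout_sub (f g : (Fin k → V) → ℂ) (x : Fin k → V) :
    pout Λ (fun z => f z - g z) x = pout Λ f x - pout Λ g x := by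
  simp only [pout, pin_sub]; ring

theorem forall_comp_perm_mem (x : Fin k → V) (σ : Equiv.Perm (Fin k)) :
    (∀ j, (x ∘ σ) j ∈ Λ) ↔ ∀ j, x j ∈ Λ :=
  ⟨fun h j => by simpa using h (σ.symm j), fun h j => h _⟩

theorem IsCochain.pin {f : (Fin (i + 1) → V) → ℂ} (hf : IsCochain G i f) :
    IsCochain G i (pin Λ f) := by
  refine ⟨fun x σ => ?_, fun x hx => ?_⟩
  · by_cases h : ∀ j, x j ∈ Λ
    · rw [pin_of_mem Λ f h, pin_of_mem Λ f ((forall_comp_perm_mem Λ x σ).2 h), hf.1]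
    · rw [pin_of_not_mem Λ f h, pin_of_not_mem Λ f (mt (forall_comp_perm_mem Λ x σ).1 h), mul_zero]
  · have h := norm_pin_le Λ f x
    rw [hf.2 x hx, norm_zero] at h
    exact norm_le_zero_iff.1 h

theorem IsCochain.sub {f g : (Fin (i + 1) → V) → ℂ} (hf : IsCochain G i f)
    (hg : IsCochain G i g) : IsCochain G i (fun x => f x - g x) :=
  ⟨fun x σ => by simp only [hf.1 x σ, hg.1 x σ]; ring,
    fun x hx => by simp only [hf.2 x hx, hg.2 x hx, sub_zero]⟩

theorem IsCochain.add {f g : (Fin (i + 1) → V) → ℂ} (hf : IsCochain G i f)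
    (hg : IsCochain G i g) : IsCochain G i (fun x => f x + g x) :=
  ⟨fun x σ => by simp only [hf.1 x σ, hg.1 x σ]; ring,
    fun x hx => by simp only [hf.2 x hx, hg.2 x hx, add_zero]⟩

theorem IsCochain.zero : IsCochain G i 0 := ⟨fun _ _ => by simp, fun _ _ => rfl⟩

theorem IsCochain.pout {f : (Fin (i + 1) → V) → ℂ} (hf : IsCochain G i f) :
    IsCochain G i (pout Λ f) := hf.sub (hf.pin Λ)

theorem IsCochain.d {f : (Fin (i + 1) → V) → ℂ} (hf : IsCochain G i f) :
    IsCochain G (i + 1) (d G i f) :=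
  ⟨d_isAlternating G i hf.1, fun _ hx => d_of_not_simplex f hx⟩

/-- A simplex inside `Λ` only has faces inside `Λ`. -/
theorem pin_d_pout (f : (Fin (i + 1) → V) → ℂ) : pin Λ (d G i (pout Λ f)) = 0 := by
  funext x
  by_cases hx : ∀ j, x j ∈ Λ
  · rw [pin_of_mem Λ _ hx]
    by_cases hs : IsSimplex G x
    · rw [d_of_simplex _ hs]
      refine Finset.sum_eq_zero fun p _ => ?_
      rw [pout_of_mem Λ f (x := x ∘ p.succAbove) (fun j => hx _), mul_zero]
    · exact d_of_not_simplex _ hs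
  · exact pin_of_not_mem Λ _ hx

/-- A simplex with a vertex outside `Λ` is not a face of a simplex inside `Λ`. -/
theorem pout_delta_pin (hi : i + 1 ≤ n) (g : (Fin (i + 2) → V) → ℂ) :
    pout Λ (delta G W i (pin Λ g)) = 0 := by
  funext x
  by_cases hx : ∀ j, x j ∈ Λ
  · exact pout_of_mem Λ _ hx
  · rw [pout_of_not_mem Λ _ hx, delta_eq W hi, Finset.sum_eq_zero, mul_zero]
    · rfl
    intro y _
    rw [pin_of_not_mem Λ, mul_zero]
    intro h
    refine hx fun j => ?_
    have := h j.castSucc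
    rwa [Fin.snoc_castSucc] at this

theorem Dop_zero (u : ∀ i : ℕ, (Fin (i + 1) → V) → ℂ) : Dop G W u 0 = delta G W 0 (u 1) := rfl

theorem Dop_succ (u : ∀ i : ℕ, (Fin (i + 1) → V) → ℂ) (hi : i + 1 ≤ n) :
    Dop G W u (i + 1) = fun x => d G i (u i) x + delta G W (i + 1) (u (i + 2)) x := by
  simp [Dop, hi]

theorem Dop_of_lt (u : ∀ i : ℕ, (Fin (i + 1) → V) → ℂ) (hi : n < i) : Dop G W u i = 0 := by
  rcases i with _ | i
  · omega
  · simp [Dop, Nat.not_le.2 hi]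

/-- Additivity of `δ` in all degrees, on functions vanishing above degree `n`. -/
theorem delta_add' {f g : (Fin (i + 2) → V) → ℂ} (hf : n < i + 1 → f = 0)
    (hg : n < i + 1 → g = 0) (x : Fin (i + 1) → V) :
    delta G W i (fun z => f z + g z) x = delta G W i f x + delta G W i g x := by
  by_cases hi : i + 1 ≤ n
  · exact delta_add W hi f g x
  · have h1 := hf (by omega)
    have h2 := hg (by omega)
    subst h1 h2
    have : (fun z : Fin (i + 2) → V => (0 : (Fin (i + 2) → V) → ℂ) z
        + (0 : (Fin (i + 2) → V) → ℂ) z) = 0 := by funext z; simp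
    rw [this, delta_zero]; simp

theorem Dop_add {u v : ∀ i : ℕ, (Fin (i + 1) → V) → ℂ} (hu : ∀ i, n < i → u i = 0)
    (hv : ∀ i, n < i → v i = 0) (i : ℕ) (x : Fin (i + 1) → V) :
    Dop G W (fun i x => u i x + v i x) i x = Dop G W u i x + Dop G W v i x := by
  rcases i with _ | i
  · simp only [Dop_zero]
    exact delta_add' W (hu 1) (hv 1) x
  · by_cases hi : i + 1 ≤ n
    · simp only [Dop_succ W _ hi]
      rw [d_add, delta_add' W (hu (i + 2)) (hv (i + 2))]
      ring
    · simp [Dop_of_lt W _ (Nat.not_le.1 hi)]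

/-- The block decomposition of `D`. -/
theorem Dop_blocks {u : ∀ i : ℕ, (Fin (i + 1) → V) → ℂ} (hu : ∀ i, n < i → u i = 0) (i : ℕ)
    (x : Fin (i + 1) → V) :
    Dop G W u i x = Din G W Λ u i x + projOut Λ (Dop G W (projIn Λ u)) i x
      + Coup G W Λ u i x + Dout G W Λ u i x := by
  have h1 : ∀ i, n < i → projIn Λ u i = 0 := fun i hi => by
    show pin Λ (u i) = 0
    rw [hu i hi, pin_zero]
  have h2 : ∀ i, n < i → projOut Λ u i = 0 := fun i hi => by
    show pout Λ (u i) = 0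
    rw [hu i hi, pout_zero]
  have h3 : u = fun i x => projIn Λ u i x + projOut Λ u i x := by
    funext i x; simp [projOut]
  have h4 : Dop G W u i x = Dop G W (projIn Λ u) i x + Dop G W (projOut Λ u) i x := by
    conv_lhs => rw [h3]
    exact Dop_add W h1 h2 i x
  rw [h4]
  simp only [Din, Coup, Dout, projOut]
  ring

theorem Coup_eq (u : ∀ i : ℕ, (Fin (i + 1) → V) → ℂ) (hi : i ≤ n) :
    Coup G W Λ u i = cpl W Λ i (u (i + 1)) := by
  rcases i with _ | i
  · rfl
  · show pin Λ (Dop G W (projOut Λ u) (i + 1)) = _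
    rw [Dop_succ W _ hi]
    funext x
    by_cases hx : ∀ j, x j ∈ Λ
    · have h := congrFun (pin_d_pout (G := G) Λ (u i)) x
      rw [pin_of_mem Λ _ hx] at h
      rw [pin_of_mem Λ _ hx, cpl, pin_of_mem Λ _ hx]
      have h' : d G i (projOut Λ u i) x = 0 := h
      rw [h', zero_add]
      rfl
    · rw [pin_of_not_mem Λ _ hx, cpl, pin_of_not_mem Λ _ hx]

theorem Coup_of_lt (u : ∀ i : ℕ, (Fin (i + 1) → V) → ℂ) (hi : n < i) :
    Coup G W Λ u i = 0 := by
  show pin Λ (Dop G W (projOut Λ u) i) = _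
  rw [Dop_of_lt W _ hi, pin_zero]

theorem cross_zero (hn : 1 ≤ n) (u : ∀ i : ℕ, (Fin (i + 1) → V) → ℂ) :
    projOut Λ (Dop G W (projIn Λ u)) 0 = 0 :=
  pout_delta_pin W Λ hn (u 1)

theorem cross_succ {u : ∀ i : ℕ, (Fin (i + 1) → V) → ℂ} (hu : ∀ i, n < i → u i = 0)
    (hi : i + 1 ≤ n) :
    projOut Λ (Dop G W (projIn Λ u)) (i + 1) = cst G Λ i (u i) := by
  show pout Λ (Dop G W (projIn Λ u) (i + 1)) = _
  have h : pout Λ (delta G W (i + 1) (projIn Λ u (i + 2))) = 0 := by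
    by_cases hi' : i + 2 ≤ n
    · exact pout_delta_pin W Λ hi' (u (i + 2))
    · have : projIn Λ u (i + 2) = 0 := by
        show pin Λ (u (i + 2)) = 0
        rw [hu _ (by omega), pin_zero]
      rw [this, delta_zero, pout_zero]
  rw [Dop_succ W _ hi]
  funext x
  by_cases hx : ∀ j, x j ∈ Λ
  · rw [pout_of_mem Λ _ hx, cst, pout_of_mem Λ _ hx]
  · have h' := congrFun h x
    rw [pout_of_not_mem Λ _ hx] at h'
    rw [pout_of_not_mem Λ _ hx, h', cst, pout_of_not_mem Λ _ hx, Pi.zero_apply, add_zero]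
    rfl

theorem cross_of_lt (u : ∀ i : ℕ, (Fin (i + 1) → V) → ℂ) (hi : n < i) :
    projOut Λ (Dop G W (projIn Λ u)) i = 0 := by
  show pout Λ (Dop G W (projIn Λ u) i) = _
  rw [Dop_of_lt W _ hi, pout_zero]

theorem cpl_zero (i : ℕ) : cpl W Λ i 0 = 0 := by
  rw [cpl, pout_zero, delta_zero, pin_zero]

theorem cpl_sub (hi : i + 1 ≤ n) (f g : (Fin (i + 2) → V) → ℂ) (x : Fin (i + 1) → V) :
    cpl W Λ i (fun z => f z - g z) x = cpl W Λ i f x - cpl W Λ i g x := by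
  rw [cpl, cpl, cpl, ← pin_sub]
  congr 1
  funext z
  rw [← delta_sub W hi]
  congr 1
  funext w
  exact pout_sub Λ f g w

theorem cst_sub (f g : (Fin (i + 1) → V) → ℂ) (x : Fin (i + 2) → V) :
    cst G Λ i (fun z => f z - g z) x = cst G Λ i f x - cst G Λ i g x := by
  rw [cst, cst, cst, ← pout_sub]
  congr 1
  funext z
  rw [← d_sub]
  congr 1
  funext w
  exact pin_sub Λ f g w

end blocks

/-! ### Boundedness of the off-diagonal blocks -/

section coupling

variable {G : WG V} {n : ℕ} (W : CliqueWeights G n) (Λ : Set V)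

/-- The boundedness hypothesis on the coupling operator, read off degree by degree. -/
theorem cpl_bound_finite {M : ℝ} (hM : 0 ≤ M)
    (h : ∀ u : ∀ i : ℕ, (Fin (i + 1) → V) → ℂ, CochainFamily G n u → FinSuppFamily u →
      normH W (Coup G W Λ u) ≤ M * normH W u) {i : ℕ} (hi : i + 1 ≤ n)
    {g : (Fin (i + 2) → V) → ℂ} (hg : IsCochain G (i + 1) g) (hgf : (Function.support g).Finite) :
    energy W i (cpl W Λ i g) ≤ ENNReal.ofReal M * energy W (i + 1) g := by
  classical
  -- the family concentrated in degree `i + 1`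
  let u : ∀ i : ℕ, (Fin (i + 1) → V) → ℂ :=
    Function.update (fun i => (0 : (Fin (i + 1) → V) → ℂ)) (i + 1) g
  have hu1 : u (i + 1) = g := Function.update_self _ _ _
  have hu0 : ∀ j, j ≠ i + 1 → u j = 0 := fun j hj => Function.update_of_ne hj _ _
  have hc : CochainFamily G n u := by
    refine ⟨fun j => ?_, fun j hj => hu0 j (by omega)⟩
    by_cases hj : j = i + 1
    · subst hj; rw [hu1]; exact hg
    · rw [hu0 j hj]; exact IsCochain.zero
  have hs : FinSuppFamily u := by
    intro j
    by_cases hj : j = i + 1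
    · subst hj; rw [hu1]; exact hgf
    · rw [hu0 j hj]; simp
  have h1 := h u hc hs
  have h2 : norm2 W i (cpl W Λ i g) ≤ normH W (Coup G W Λ u) := by
    have h3 : cpl W Λ i g = Coup G W Λ u i := by
      rw [Coup_eq W Λ u (by omega), hu1]
    rw [h3]
    exact Finset.single_le_sum (f := fun j => norm2 W j (Coup G W Λ u j))
      (fun j _ => norm2_nonneg W _) (Finset.mem_range.2 (by omega))
  have h4 : normH W u = norm2 W (i + 1) g := by
    rw [normH, Finset.sum_eq_single (i + 1), hu1]
    · intro j _ hj
      rw [hu0 j hj, norm2_eq, energy_zero]; simp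
    · intro h; exact absurd (Finset.mem_range.2 (by omega)) h
  rw [h4] at h1
  have h5 := h2.trans h1
  rw [norm2_eq, norm2_eq] at h5
  have hfin1 : energy W i (cpl W Λ i g) ≠ ⊤ := by
    refine ne_top_of_le_ne_top ?_ (energy_mono W (norm_pin_le Λ _))
    refine energy_ne_top_of_finite W (finite_support_delta W hi (hgf.subset ?_))
    intro x hx hgx
    apply hx
    have := norm_pout_le Λ g x
    rw [hgx, norm_zero] at this
    exact norm_le_zero_iff.1 this
  have hfin2 : energy W (i + 1) g ≠ ⊤ := energy_ne_top_of_finite W hgf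
  rw [← ENNReal.ofReal_toReal hfin1, ← ENNReal.ofReal_toReal hfin2,
    ← ENNReal.ofReal_mul hM]
  refine ENNReal.ofReal_le_ofReal ?_
  set a := (energy W i (cpl W Λ i g)).toReal
  set b := (energy W (i + 1) g).toReal
  have hb : 0 ≤ b := ENNReal.toReal_nonneg
  have hp : (0 : ℝ) < (Nat.factorial (i + 1) : ℝ) := by positivity
  have hfac : ((Nat.factorial (i + 1 + 1) : ℝ))⁻¹ ≤ ((Nat.factorial (i + 1) : ℝ))⁻¹ := by
    refine inv_anti₀ hp ?_
    exact_mod_cast Nat.factorial_le (by omega)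
  have h6 : ((Nat.factorial (i + 1) : ℝ))⁻¹ * a ≤ ((Nat.factorial (i + 1) : ℝ))⁻¹ * (M * b) := by
    refine h5.trans ?_
    calc M * (((Nat.factorial (i + 1 + 1) : ℝ))⁻¹ * b)
        ≤ M * (((Nat.factorial (i + 1) : ℝ))⁻¹ * b) := by gcongr
      _ = _ := by ring
  exact le_of_mul_le_mul_left h6 (by positivity)

/-- Truncation of a cochain to the tuples with entries in a finite set has finite support. -/
theorem finite_support_pin {A : Set V} (hA : A.Finite) {k : ℕ} (f : (Fin k → V) → ℂ) :
    (Function.support (pin A f)).Finite := by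
  refine (Set.Finite.pi' fun _ : Fin k => hA).subset ?_
  intro x hx
  by_contra h
  exact hx (pin_of_not_mem A f h)

variable {W Λ}

/-- Extension of the bound on `P δ Q` from finitely supported cochains to all cochains, by
locality of `δ`. -/
theorem cpl_bound {K : ENNReal} {i : ℕ} (hi : i + 1 ≤ n)
    (hK : ∀ g : (Fin (i + 2) → V) → ℂ, IsCochain G (i + 1) g → (Function.support g).Finite →
      energy W i (cpl W Λ i g) ≤ K * energy W (i + 1) g)
    {g : (Fin (i + 2) → V) → ℂ} (hg : IsCochain G (i + 1) g) :
    energy W i (cpl W Λ i g) ≤ K * energy W (i + 1) g := by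
  rw [energy, ENNReal.tsum_eq_iSup_sum]
  refine iSup_le fun s => ?_
  -- `A` contains all vertices that influence the values of `cpl g` on `s`
  let A : Set V := (⋃ x ∈ s, Set.range x) ∪ ⋃ x ∈ s, (nbr G (x 0) : Set V)
  have hA : A.Finite := by
    refine Set.Finite.union ?_ ?_
    · exact Set.Finite.biUnion s.finite_toSet fun x _ => Set.finite_range x
    · exact Set.Finite.biUnion s.finite_toSet fun x _ => Finset.finite_toSet _
  have hEq : ∀ x ∈ s, cpl W Λ i g x = cpl W Λ i (pin A g) x := by
    intro x hx
    by_cases hxΛ : ∀ j, x j ∈ Λ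
    · rw [cpl, cpl, pin_of_mem Λ _ hxΛ, pin_of_mem Λ _ hxΛ, delta_eq W hi, delta_eq W hi]
      congr 1
      refine Finset.sum_congr rfl fun y hy => ?_
      have hmem : ∀ j, (Fin.snoc x y : Fin (i + 2) → V) j ∈ A := by
        intro j
        refine Fin.lastCases ?_ (fun a => ?_) j
        · rw [Fin.snoc_last]
          exact Or.inr (Set.mem_biUnion hx hy)
        · rw [Fin.snoc_castSucc]
          exact Or.inl (Set.mem_biUnion hx (Set.mem_range_self a))
      congr 1
      by_cases hz : ∀ j, (Fin.snoc x y : Fin (i + 2) → V) j ∈ Λ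
      · rw [pout_of_mem Λ _ hz, pout_of_mem Λ _ hz]
      · rw [pout_of_not_mem Λ _ hz, pout_of_not_mem Λ _ hz, pin_of_mem A _ hmem]
    · rw [cpl, cpl, pin_of_not_mem Λ _ hxΛ, pin_of_not_mem Λ _ hxΛ]
  calc ∑ x ∈ s, ENNReal.ofReal (W.m i x * ‖cpl W Λ i g x‖ ^ 2)
      = ∑ x ∈ s, ENNReal.ofReal (W.m i x * ‖cpl W Λ i (pin A g) x‖ ^ 2) :=
        Finset.sum_congr rfl fun x hx => by rw [hEq x hx]
    _ ≤ energy W i (cpl W Λ i (pin A g)) := ENNReal.sum_le_tsum s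
    _ ≤ K * energy W (i + 1) (pin A g) := hK _ (hg.pin A) (finite_support_pin hA g)
    _ ≤ K * energy W (i + 1) g := by gcongr; exact energy_mono W (norm_pin_le A g)

/-- Splitting off the `p`-th vertex in a sum over tuples with entries in a finite set. -/
theorem sum_piFinset_insertNth [DecidableEq V] (A : Finset V) {k : ℕ} (p : Fin (k + 1))
    (F : (Fin (k + 1) → V) → ℂ) :
    ∑ z ∈ Fintype.piFinset (fun _ : Fin (k + 1) => A), F z
      = ∑ x ∈ Fintype.piFinset (fun _ : Fin k => A), ∑ y ∈ A, F (p.insertNth y x) := by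
  rw [← Finset.sum_product']
  refine Finset.sum_bij' (fun z _ => (p.removeNth z, z p))
    (fun q _ => p.insertNth q.2 q.1) ?_ ?_ ?_ ?_ ?_
  · intro z hz
    rw [Fintype.mem_piFinset] at hz
    rw [Finset.mem_product, Fintype.mem_piFinset]
    exact ⟨fun j => hz _, hz _⟩
  · intro q hq
    rw [Finset.mem_product, Fintype.mem_piFinset] at hq
    rw [Fintype.mem_piFinset]
    intro j
    refine Fin.succAboveCases p ?_ (fun a => ?_) j
    · simpa using hq.2
    · simpa using hq.1 a
  · intro z _
    exact Fin.insertNth_self_removeNth p z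
  · intro q _
    simp
  · intro z _
    rw [Fin.insertNth_self_removeNth]

/-- Summation by parts: up to the sign `(-1)^(i+1)`, `δ` is the formal adjoint of `d`. -/
theorem sum_d_mul_conj [DecidableEq V] {i : ℕ} (hi : i + 1 ≤ n) {f : (Fin (i + 1) → V) → ℂ}
    (hf : ∀ x, ¬ IsSimplex G x → f x = 0) {w : (Fin (i + 2) → V) → ℂ} (hw : IsAlternating w)
    (A : Finset V) (hwA : ∀ z, (¬ ∀ j, z j ∈ A) → w z = 0) :
    ∑ z ∈ Fintype.piFinset (fun _ : Fin (i + 2) => A),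
        ((W.m (i + 1) z : ℝ) : ℂ) * (d G i f z * (starRingEnd ℂ) (w z))
      = ((i + 2 : ℕ) : ℂ) * (-1) ^ (i + 1) *
        ∑ x ∈ Fintype.piFinset (fun _ : Fin (i + 1) => A),
          ((W.m i x : ℝ) : ℂ) * (f x * (starRingEnd ℂ) (delta G W i w x)) := by
  have h1 : ∀ z : Fin (i + 2) → V,
      ((W.m (i + 1) z : ℝ) : ℂ) * (d G i f z * (starRingEnd ℂ) (w z))
        = ∑ p : Fin (i + 2), ((W.m (i + 1) z : ℝ) : ℂ) *
          ((-1) ^ (p : ℕ) * f (p.removeNth z) * (starRingEnd ℂ) (w z)) := by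
    intro z
    by_cases hz : IsSimplex G z
    · rw [d_of_simplex f hz, Finset.sum_mul, Finset.mul_sum]
      rfl
    · have h0 : W.m (i + 1) z = 0 := by
        by_contra h
        exact hz ((W.m_pos_iff hi z).1 (lt_of_le_of_ne (W.nonneg _ _) (Ne.symm h)))
      simp [h0]
  have h2 : ∀ x : Fin (i + 1) → V,
      f x * ∑ y ∈ A, ((W.m (i + 1) (Fin.snoc x y) : ℝ) : ℂ) * (starRingEnd ℂ) (w (Fin.snoc x y))
        = ((W.m i x : ℝ) : ℂ) * (f x * (starRingEnd ℂ) (delta G W i w x)) := by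
    intro x
    by_cases hx : IsSimplex G x
    · have hm : ((W.m i x : ℝ) : ℂ) ≠ 0 := by
        exact_mod_cast ((W.m_pos_iff (by omega) x).2 hx).ne'
      have h3 : ∑ y ∈ A, ((W.m (i + 1) (Fin.snoc x y) : ℝ) : ℂ) * w (Fin.snoc x y)
          = ∑ y ∈ nbr G (x 0), ((W.m (i + 1) (Fin.snoc x y) : ℝ) : ℂ) * w (Fin.snoc x y) := by
        have hA : ∀ y, y ∉ A → w (Fin.snoc x y) = 0 := fun y hy => hwA _ fun h => hy (by
          have := h (Fin.last (i + 1))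
          rwa [Fin.snoc_last] at this)
        have e1 : ∑' y, ((W.m (i + 1) (Fin.snoc x y) : ℝ) : ℂ) * w (Fin.snoc x y)
            = ∑ y ∈ A, ((W.m (i + 1) (Fin.snoc x y) : ℝ) : ℂ) * w (Fin.snoc x y) :=
          tsum_eq_sum fun y hy => by simp [hA y hy]
        have e2 : ∑' y, ((W.m (i + 1) (Fin.snoc x y) : ℝ) : ℂ) * w (Fin.snoc x y)
            = ∑ y ∈ nbr G (x 0), ((W.m (i + 1) (Fin.snoc x y) : ℝ) : ℂ) * w (Fin.snoc x y) :=
          tsum_eq_sum fun y hy => by simp [m_snoc_eq_zero W hi hy]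
        exact e1.symm.trans e2
      rw [delta_eq W hi, ← h3]
      simp only [map_mul, map_inv₀, map_sum, Complex.conj_ofReal]
      field_simp
    · simp [hf x hx]
  simp only [h1]
  rw [Finset.sum_comm]
  have h4 : ∀ p : Fin (i + 2), ∑ z ∈ Fintype.piFinset (fun _ : Fin (i + 2) => A),
      ((W.m (i + 1) z : ℝ) : ℂ) * ((-1) ^ (p : ℕ) * f (p.removeNth z) * (starRingEnd ℂ) (w z))
      = (-1) ^ (i + 1) * ∑ x ∈ Fintype.piFinset (fun _ : Fin (i + 1) => A),
          ((W.m i x : ℝ) : ℂ) * (f x * (starRingEnd ℂ) (delta G W i w x)) := by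
    intro p
    rw [sum_piFinset_insertNth A p, Finset.mul_sum]
    refine Finset.sum_congr rfl fun x _ => ?_
    rw [← h2 x, Finset.mul_sum, Finset.mul_sum]
    refine Finset.sum_congr rfl fun y _ => ?_
    rw [W.m_insertNth hi, hw.insertNth, Fin.removeNth_insertNth]
    have : ((-1 : ℂ) ^ (p : ℕ)) * (-1) ^ (p : ℕ) = 1 := by rw [← mul_pow]; simp
    simp only [map_mul, map_pow, map_neg, map_one]
    linear_combination ((W.m (i + 1) (Fin.snoc x y) : ℝ) : ℂ) * f x * (-1) ^ (i + 1) *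
      (starRingEnd ℂ) (w (Fin.snoc x y)) * this
  rw [Finset.sum_congr rfl fun p _ => h4 p]
  simp only [Finset.sum_const, Finset.card_univ, Fintype.card_fin, nsmul_eq_mul]
  ring

/-- The block `Q d P` is bounded, being up to signs the adjoint of `P δ Q`. -/
theorem cst_bound {M : ℝ} (hM : 0 ≤ M) {i : ℕ} (hi : i + 1 ≤ n)
    (hK : ∀ g : (Fin (i + 2) → V) → ℂ, IsCochain G (i + 1) g → (Function.support g).Finite →
      energy W i (cpl W Λ i g) ≤ ENNReal.ofReal M * energy W (i + 1) g)
    {f : (Fin (i + 1) → V) → ℂ} (hf : IsCochain G i f) (hfE : energy W i f ≠ ⊤) :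
    energy W (i + 1) (cst G Λ i f)
      ≤ ENNReal.ofReal (((i + 2 : ℕ) : ℝ) ^ 2 * M) * energy W i f := by
  classical
  rw [energy, ENNReal.tsum_eq_iSup_sum]
  refine iSup_le fun s => ?_
  let A : Finset V := s.biUnion fun x => Finset.univ.image x
  -- the test cochain `w` is the truncation of `Q d P f` to the vertex set `A`
  let w := pin (A : Set V) (cst G Λ i f)
  have hwc : IsCochain G (i + 1) w := ((hf.pin Λ).d.pout Λ).pin _
  have hwf : (Function.support w).Finite := finite_support_pin A.finite_toSet _
  have hwE := energy_ne_top_of_finite W hwf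
  have hwA : ∀ z, (¬ ∀ j, z j ∈ A) → w z = 0 := fun z hz => pin_of_not_mem _ _ hz
  have hwout : pout Λ w = w := by
    funext z
    by_cases hz : ∀ j, z j ∈ Λ
    · rw [pout_of_mem Λ _ hz]
      have h : cst G Λ i f z = 0 := pout_of_mem Λ _ hz
      have h' := norm_pin_le (A : Set V) (cst G Λ i f) z
      rw [h, norm_zero] at h'
      exact (norm_le_zero_iff.1 h').symm
    · exact pout_of_not_mem Λ _ hz
  have hsum : ∑ x ∈ s, ENNReal.ofReal (W.m (i + 1) x * ‖cst G Λ i f x‖ ^ 2)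
      ≤ energy W (i + 1) w := by
    refine le_trans (le_of_eq (Finset.sum_congr rfl fun x hx => ?_)) (ENNReal.sum_le_tsum s)
    have : w x = cst G Λ i f x := pin_of_mem _ _ fun j =>
      Finset.mem_coe.2 (Finset.mem_biUnion.2 ⟨x, hx, Finset.mem_image_of_mem x (Finset.mem_univ j)⟩)
    rw [this]
  refine hsum.trans ?_
  set B := Fintype.piFinset (fun _ : Fin (i + 2) => A) with hB
  set B' := Fintype.piFinset (fun _ : Fin (i + 1) => A) with hB'
  have hR : energy W (i + 1) w = ENNReal.ofReal (∑ z ∈ B, W.m (i + 1) z * ‖w z‖ ^ 2) := by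
    rw [energy, tsum_eq_sum (s := B), ENNReal.ofReal_sum_of_nonneg]
    · exact fun z _ => mul_nonneg (W.nonneg _ _) (by positivity)
    · intro z hz
      rw [hwA z (fun h => hz (Fintype.mem_piFinset.2 h))]; simp
  set R := ∑ z ∈ B, W.m (i + 1) z * ‖w z‖ ^ 2 with hRdef
  have hR0 : 0 ≤ R := Finset.sum_nonneg fun z _ => mul_nonneg (W.nonneg _ _) (by positivity)
  have hpart := sum_d_mul_conj (W := W) hi (hf.pin Λ).2 hwc.1 A hwA
  -- the left-hand side is the squared norm of `w`
  have hL : ∑ z ∈ B, ((W.m (i + 1) z : ℝ) : ℂ) * (d G i (pin Λ f) z * (starRingEnd ℂ) (w z))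
      = ((R : ℝ) : ℂ) := by
    rw [hRdef, Complex.ofReal_sum]
    refine Finset.sum_congr rfl fun z _ => ?_
    by_cases hz : w z = 0
    · simp [hz]
    · have h1 : ¬ ∀ j, z j ∈ Λ := fun h => hz (by rw [← hwout]; exact pout_of_mem Λ _ h)
      have h2 : ∀ j, z j ∈ A := by by_contra h; exact hz (hwA z h)
      have h3 : w z = d G i (pin Λ f) z := by
        rw [← pout_of_not_mem Λ (d G i (pin Λ f)) h1]
        exact pin_of_mem _ _ h2
      rw [← h3, Complex.mul_conj, Complex.normSq_eq_norm_sq]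
      push_cast
      ring
  rw [hL] at hpart
  have hbound : R ≤ ((i + 2 : ℕ) : ℝ) * ∑ x ∈ B', W.m i x * (‖f x‖ * ‖cpl W Λ i w x‖) := by
    have h1 := congrArg (fun c : ℂ => ‖c‖) hpart
    simp only [Complex.norm_real, Real.norm_of_nonneg hR0, norm_mul, norm_pow, norm_neg, norm_one,
      one_pow, mul_one, Complex.norm_natCast] at h1
    rw [h1]
    gcongr
    refine (norm_sum_le _ _).trans (Finset.sum_le_sum fun x _ => ?_)
    rw [norm_mul, norm_mul, Complex.norm_real, Real.norm_of_nonneg (W.nonneg _ _),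
      RCLike.norm_conj]
    refine mul_le_mul_of_nonneg_left ?_ (W.nonneg _ _)
    by_cases hx : ∀ j, x j ∈ Λ
    · rw [pin_of_mem Λ f hx, cpl, pin_of_mem Λ _ hx, hwout]
    · rw [pin_of_not_mem Λ f hx, norm_zero, zero_mul]; positivity
  have hCS : (∑ x ∈ B', W.m i x * (‖f x‖ * ‖cpl W Λ i w x‖)) ^ 2
      ≤ (∑ x ∈ B', W.m i x * ‖f x‖ ^ 2) * ∑ x ∈ B', W.m i x * ‖cpl W Λ i w x‖ ^ 2 := by
    have h := Finset.sum_mul_sq_le_sq_mul_sq B' (fun x => √(W.m i x) * ‖f x‖)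
      (fun x => √(W.m i x) * ‖cpl W Λ i w x‖)
    have hrew : ∀ x, √(W.m i x) * ‖f x‖ * (√(W.m i x) * ‖cpl W Λ i w x‖)
        = W.m i x * (‖f x‖ * ‖cpl W Λ i w x‖) := fun x => by
      linear_combination (‖f x‖ * ‖cpl W Λ i w x‖) * Real.mul_self_sqrt (W.nonneg i x)
    simp only [hrew] at h
    simpa only [mul_pow, Real.sq_sqrt (W.nonneg _ _)] using h
  set F := (energy W i f).toReal with hF
  have hle : ∀ (h : (Fin (i + 1) → V) → ℂ), energy W i h ≠ ⊤ →
      ∑ x ∈ B', W.m i x * ‖h x‖ ^ 2 ≤ (energy W i h).toReal := by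
    intro h hh
    rw [← ENNReal.ofReal_le_iff_le_toReal hh, ENNReal.ofReal_sum_of_nonneg]
    · exact ENNReal.sum_le_tsum B'
    · exact fun z _ => mul_nonneg (W.nonneg _ _) (by positivity)
  have hF1 := hle f hfE
  have hcw := hK w hwc hwf
  rw [hR, ← ENNReal.ofReal_mul hM] at hcw
  have hF2 := (hle _ (ne_top_of_le_ne_top ENNReal.ofReal_ne_top hcw)).trans
    (ENNReal.toReal_le_of_le_ofReal (mul_nonneg hM hR0) hcw)
  have hF0 : 0 ≤ F := ENNReal.toReal_nonneg
  have hfinal : R ≤ ((i + 2 : ℕ) : ℝ) ^ 2 * M * F := by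
    have hS0 : 0 ≤ ∑ x ∈ B', W.m i x * ‖cpl W Λ i w x‖ ^ 2 :=
      Finset.sum_nonneg fun z _ => mul_nonneg (W.nonneg _ _) (by positivity)
    have h1 : R ^ 2 ≤ ((i + 2 : ℕ) : ℝ) ^ 2 * (F * (M * R)) := by
      calc R ^ 2 ≤ (((i + 2 : ℕ) : ℝ) * ∑ x ∈ B', W.m i x * (‖f x‖ * ‖cpl W Λ i w x‖)) ^ 2 := by
            gcongr
        _ = ((i + 2 : ℕ) : ℝ) ^ 2 * (∑ x ∈ B', W.m i x * (‖f x‖ * ‖cpl W Λ i w x‖)) ^ 2 := by ring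
        _ ≤ _ := by
            gcongr
            exact hCS.trans (mul_le_mul hF1 hF2 hS0 hF0)
    rcases hR0.eq_or_lt with h0 | h0
    · rw [← h0]; positivity
    · refine le_of_mul_le_mul_right ?_ h0
      linarith [h1]
  rw [hR, ← ENNReal.ofReal_toReal hfE, ← ENNReal.ofReal_mul (by positivity)]
  exact ENNReal.ofReal_le_ofReal hfinal

end coupling

/-! ### Cut-off functions on the region -/

section cutoffs

variable {G : WG V} {n : ℕ} {W : CliqueWeights G n} {Λ : Set V}

theorem isSimplex_of_m_ne_zero {i : ℕ} (hi : i ≤ n) {x : Fin (i + 1) → V} (h : W.m i x ≠ 0) :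
    IsSimplex G x :=
  (W.m_pos_iff hi x).1 (lt_of_le_of_ne (W.nonneg _ _) (Ne.symm h))

theorem forall_snoc_mem {j : ℕ} {S : Set V} {x : Fin j → V} {y : V} (hx : ∀ a, x a ∈ S)
    (hy : y ∈ S) (a : Fin (j + 1)) : (Fin.snoc x y : Fin (j + 1) → V) a ∈ S := by
  induction a using Fin.lastCases with
  | last => simpa only [Fin.snoc_last] using hy
  | cast b => simpa only [Fin.snoc_castSucc] using hx b

theorem avg_face (χ : V → ℝ) {j : ℕ} (z : Fin (j + 2) → V) (a : Fin (j + 2)) :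
    avg χ (z ∘ a.succAbove)
      = ((j + 1 : ℕ) : ℂ)⁻¹ * ((∑ b, (χ (z b) : ℂ)) - (χ (z a) : ℂ)) := by
  rw [avg, Fin.sum_univ_succAbove _ a, add_sub_cancel_left]
  rfl

theorem sum_neg_one_pow_even {j : ℕ} (hj : Even j) :
    ∑ a : Fin (j + 2), (-1 : ℂ) ^ (a : ℕ) = 0 := by
  rw [Fin.sum_univ_eq_sum_range (fun a => (-1 : ℂ) ^ a), neg_one_geom_sum, if_pos]
  exact hj.add (by decide)

theorem sum_neg_one_pow_odd {j : ℕ} (hj : ¬ Even j) :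
    ∑ a : Fin (j + 2), (-1 : ℂ) ^ (a : ℕ) = 1 := by
  rw [Fin.sum_univ_eq_sum_range (fun a => (-1 : ℂ) ^ a), neg_one_geom_sum, if_neg]
  intro h
  exact hj ((Nat.even_add.1 h).2 (by decide))

/-- In even degree the gradient of an averaged function is an alternating sum of its vertex
values. -/
theorem dOn_avg_even (χ : V → ℝ) {j : ℕ} (hj : Even j) {z : Fin (j + 2) → V}
    (hz : IsSimplex G z) (hzΛ : ∀ a, z a ∈ Λ) :
    dOn G Λ j (fun σ => avg χ σ) z
      = ((-((j + 1 : ℕ) : ℝ)⁻¹ * ∑ a : Fin (j + 2), (-1) ^ (a : ℕ) * χ (z a) : ℝ) : ℂ) := by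
  rw [dOn, Set.indicator_of_mem (show z ∈ {x | IsSimplex G x ∧ ∀ j, x j ∈ Λ} from ⟨hz, hzΛ⟩)]
  simp only [avg_face]
  have h := sum_neg_one_pow_even hj
  push_cast
  have h1 : ∀ a : Fin (j + 2), (-1 : ℂ) ^ (a : ℕ) *
      (((j : ℂ) + 1)⁻¹ * ((∑ b, (χ (z b) : ℂ)) - (χ (z a) : ℂ)))
      = (-1 : ℂ) ^ (a : ℕ) * (((j : ℂ) + 1)⁻¹ * ∑ b, (χ (z b) : ℂ))
        - ((j : ℂ) + 1)⁻¹ * ((-1 : ℂ) ^ (a : ℕ) * (χ (z a) : ℂ)) := fun a => by ring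
  simp only [h1, Finset.sum_sub_distrib, ← Finset.sum_mul, h, ← Finset.mul_sum]
  ring

/-- Adding the alternating sum for `x` and for its cyclic rotation isolates the difference
between the first vertex and the appended one. -/
theorem alt_sum_add_rotate (χ : V → ℝ) {j : ℕ} (hj : Even j) (x : Fin (j + 1) → V) (y : V) :
    (∑ a : Fin (j + 2), (-1 : ℝ) ^ (a : ℕ) * χ ((Fin.snoc x y : Fin (j + 2) → V) a))
      + (∑ a : Fin (j + 2),
          (-1 : ℝ) ^ (a : ℕ) * χ ((Fin.snoc (x ∘ finRotate (j + 1)) y : Fin (j + 2) → V) a))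
      = 2 * (χ (x 0) - χ y) := by
  rw [Fin.sum_univ_castSucc, Fin.sum_univ_castSucc (n := j + 1)]
  simp only [Fin.snoc_castSucc, Fin.snoc_last, Fin.val_castSucc, Fin.val_last]
  rw [Fin.sum_univ_succ, Fin.sum_univ_castSucc (n := j)]
  simp only [Function.comp_apply, finRotate_apply, Fin.coeSucc_eq_succ, Fin.last_add_one,
    Fin.val_castSucc, Fin.val_last, Fin.val_succ, Fin.val_zero, pow_zero, pow_succ,
    hj.neg_one_pow, mul_neg, mul_one, neg_mul, Finset.sum_neg_distrib]
  ring

theorem grad_finset {C : ℝ} {χ : V → ℝ} {j : ℕ} (hj : j + 1 ≤ n) {x : Fin (j + 1) → V}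
    (hx : IsSimplex G x) (h : gradEnergyOn W Λ j χ x ≤ C) (s : Finset V) :
    ∑ y ∈ s, Λ.indicator (fun y => W.m (j + 1) (Fin.snoc x y) *
      ‖dOn G Λ j (fun σ : Fin (j + 1) → V => avg χ σ) (Fin.snoc x y)‖ ^ 2) y
      ≤ C * W.m j x := by
  have hm := (W.m_pos_iff (by omega) x).2 hx
  have hnn : ∀ y, 0 ≤ Λ.indicator (fun y => W.m (j + 1) (Fin.snoc x y) *
      ‖dOn G Λ j (fun σ : Fin (j + 1) → V => avg χ σ) (Fin.snoc x y)‖ ^ 2) y := fun y =>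
    Set.indicator_nonneg (fun y _ => mul_nonneg (W.nonneg _ _) (by positivity)) y
  have hs : Summable fun y => Λ.indicator (fun y => W.m (j + 1) (Fin.snoc x y) *
      ‖dOn G Λ j (fun σ : Fin (j + 1) → V => avg χ σ) (Fin.snoc x y)‖ ^ 2) y := by
    refine summable_of_ne_finset_zero (s := nbr G (x 0)) fun y hy => ?_
    by_cases hyΛ : y ∈ Λ
    · rw [Set.indicator_of_mem hyΛ, m_snoc_eq_zero W hj hy, zero_mul]
    · exact Set.indicator_of_notMem hyΛ _
  refine (hs.sum_le_tsum s fun y _ => hnn y).trans ?_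
  rw [gradEnergyOn, inv_mul_le_iff₀ hm] at h
  linarith

theorem grad_even {C : ℝ} {χ : V → ℝ} {j : ℕ} (hj : j + 1 ≤ n) (hje : Even j)
    (h : ∀ x : Fin (j + 1) → V, IsSimplex G x → (∀ a, x a ∈ Λ) → gradEnergyOn W Λ j χ x ≤ C)
    {x : Fin (j + 1) → V} (hx : IsSimplex G x) (hxΛ : ∀ a, x a ∈ Λ) (s : Finset V) :
    ∑ y ∈ s, Λ.indicator (fun y => W.m (j + 1) (Fin.snoc x y) * (χ (x 0) - χ y) ^ 2) y
      ≤ ((j : ℝ) + 1) ^ 2 * C * W.m j x := by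
  set r := finRotate (j + 1)
  have hx' : IsSimplex G (x ∘ r) := hx.comp_injective r.injective
  have hxΛ' : ∀ a, (x ∘ r) a ∈ Λ := fun a => hxΛ _
  have h1 := grad_finset hj hx (h x hx hxΛ) s
  have h2 := grad_finset hj hx' (h _ hx' hxΛ') s
  rw [W.m_perm (by omega)] at h2
  have h3 : ∑ y ∈ s, Λ.indicator (fun y => W.m (j + 1) (Fin.snoc x y) * (χ (x 0) - χ y) ^ 2) y
      ≤ ∑ y ∈ s, (((j : ℝ) + 1) ^ 2 / 2 * Λ.indicator (fun y => W.m (j + 1) (Fin.snoc x y) *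
        ‖dOn G Λ j (fun σ : Fin (j + 1) → V => avg χ σ) (Fin.snoc x y)‖ ^ 2) y
        + ((j : ℝ) + 1) ^ 2 / 2 * Λ.indicator (fun y => W.m (j + 1) (Fin.snoc (x ∘ r) y) *
        ‖dOn G Λ j (fun σ : Fin (j + 1) → V => avg χ σ) (Fin.snoc (x ∘ r) y)‖ ^ 2) y) := by
    refine Finset.sum_le_sum fun y _ => ?_
    by_cases hy : y ∈ Λ
    · simp only [Set.indicator_of_mem hy]
      obtain ⟨τ, hτ⟩ := snoc_comp_perm r x y
      have hmm : W.m (j + 1) (Fin.snoc (x ∘ r) y) = W.m (j + 1) (Fin.snoc x y) := by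
        rw [hτ, W.m_perm hj]
      rw [hmm]
      by_cases hm : W.m (j + 1) (Fin.snoc x y) = 0
      · simp [hm]
      · have hz := isSimplex_of_m_ne_zero hj hm
        have hz' := isSimplex_of_m_ne_zero hj (hmm.trans_ne hm)
        rw [dOn_avg_even χ hje hz (forall_snoc_mem hxΛ hy),
          dOn_avg_even χ hje hz' (forall_snoc_mem hxΛ' hy)]
        have hs := alt_sum_add_rotate χ hje x y
        set A := ∑ a : Fin (j + 2), (-1 : ℝ) ^ (a : ℕ) * χ ((Fin.snoc x y : Fin (j + 2) → V) a)
        set B := ∑ a : Fin (j + 2),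
          (-1 : ℝ) ^ (a : ℕ) * χ ((Fin.snoc (x ∘ r) y : Fin (j + 2) → V) a)
        have hd : χ (x 0) - χ y = (A + B) / 2 := by linarith
        rw [hd, Complex.norm_real, Complex.norm_real, Real.norm_eq_abs, Real.norm_eq_abs, sq_abs,
          sq_abs]
        have hj0 : ((j : ℝ) + 1) ≠ 0 := by positivity
        have e : ((j : ℝ) + 1) ^ 2 / 2 * (W.m (j + 1) (Fin.snoc x y) *
            (-((j + 1 : ℕ) : ℝ)⁻¹ * A) ^ 2) + ((j : ℝ) + 1) ^ 2 / 2 *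
            (W.m (j + 1) (Fin.snoc x y) * (-((j + 1 : ℕ) : ℝ)⁻¹ * B) ^ 2)
            = W.m (j + 1) (Fin.snoc x y) * ((A ^ 2 + B ^ 2) / 2) := by
          push_cast
          field_simp
        rw [e]
        refine mul_le_mul_of_nonneg_left ?_ (W.nonneg _ _)
        nlinarith [sq_nonneg (A - B), sq_nonneg A, sq_nonneg B]
    · simp [Set.indicator_of_notMem hy]
  refine h3.trans ?_
  rw [Finset.sum_add_distrib, ← Finset.mul_sum, ← Finset.mul_sum]
  have hp : (0 : ℝ) ≤ ((j : ℝ) + 1) ^ 2 / 2 := by positivity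
  have := mul_le_mul_of_nonneg_left h1 hp
  have := mul_le_mul_of_nonneg_left h2 hp
  linarith

/-- In odd degree the gradient of the constant function `1` is `1`, so that the gradient bound on
large plateaus controls the total weight of the cofaces lying over `Λ`. -/
theorem grad_odd {O : ℕ → Set V} {χ : ℕ → V → ℝ} (hO : ∀ v ∈ Λ, ∀ᶠ k in atTop, v ∈ O k)
    {j : ℕ} (hj : j + 1 ≤ n) (hjo : ¬ Even j)
    (hone : ∀ k, ∀ x : Fin (j + 1) → V, IsSimplex G x → (∀ a, x a ∈ Λ) → (∀ a, x a ∈ O k) →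
      avg (χ k) x = 1)
    {C : ℝ} {x : Fin (j + 1) → V} (hx : IsSimplex G x) (hxΛ : ∀ a, x a ∈ Λ)
    (h : ∀ k, gradEnergyOn W Λ j (χ k) x ≤ C) (s : Finset V) :
    ∑ y ∈ s, Λ.indicator (fun y => W.m (j + 1) (Fin.snoc x y)) y ≤ C * W.m j x := by
  have h1 : ∀ᶠ k in atTop, ∀ a, x a ∈ O k := eventually_all.2 fun a => hO _ (hxΛ a)
  have h2 : ∀ᶠ k in atTop, ∀ y ∈ s, y ∈ Λ → y ∈ O k := by
    refine (Finset.eventually_all s).2 fun y _ => ?_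
    by_cases hy : y ∈ Λ
    · filter_upwards [hO y hy] with k hk _ using hk
    · exact Eventually.of_forall fun k hk => absurd hk hy
  obtain ⟨k, hk1, hk2⟩ := (h1.and h2).exists
  refine le_trans (le_of_eq (Finset.sum_congr rfl fun y hys => ?_)) (grad_finset hj hx (h k) s)
  by_cases hy : y ∈ Λ
  · simp only [Set.indicator_of_mem hy]
    by_cases hm : W.m (j + 1) (Fin.snoc x y) = 0
    · simp [hm]
    · have hz := isSimplex_of_m_ne_zero hj hm
      have hzΛ := forall_snoc_mem hxΛ hy
      have hzO := forall_snoc_mem hk1 (hk2 y hys hy)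
      have hd : dOn G Λ j (fun σ => avg (χ k) σ) (Fin.snoc x y) = 1 := by
        rw [dOn, Set.indicator_of_mem
          (show Fin.snoc x y ∈ {x | IsSimplex G x ∧ ∀ j, x j ∈ Λ} from ⟨hz, hzΛ⟩)]
        refine Eq.trans ?_ (sum_neg_one_pow_odd hjo)
        refine Finset.sum_congr rfl fun a _ => ?_
        rw [hone k _ (hz.comp_injective Fin.succAbove_right_injective) (fun b => hzΛ _)
          (fun b => hzO _), mul_one]
      rw [hd]; simp
  · simp [Set.indicator_of_notMem hy]

/-- The vertex function `χ` truncated to `[0, 1]`. -/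
noncomputable def clamp (χ : V → ℝ) (v : V) : ℝ := max 0 (min 1 (χ v))

theorem clamp_nonneg (χ : V → ℝ) (v : V) : 0 ≤ clamp χ v := le_max_left _ _

theorem clamp_le_one (χ : V → ℝ) (v : V) : clamp χ v ≤ 1 :=
  max_le zero_le_one (min_le_left _ _)

theorem clamp_sub_sq_le (χ : V → ℝ) (v w : V) :
    (clamp χ v - clamp χ w) ^ 2 ≤ (χ v - χ w) ^ 2 := by
  refine sq_le_sq.2 ?_
  unfold clamp
  rw [max_comm 0, max_comm 0, min_comm 1, min_comm 1]
  exact (abs_sup_sub_sup_le_abs (min (χ v) 1) (min (χ w) 1) 0).trans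
    (abs_inf_sub_inf_le_abs (χ v) (χ w) 1)

theorem clamp_sub_sq_le_one (χ : V → ℝ) (v w : V) : (clamp χ v - clamp χ w) ^ 2 ≤ 1 := by
  have h1 := clamp_nonneg χ v
  have h2 := clamp_le_one χ v
  have h3 := clamp_nonneg χ w
  have h4 := clamp_le_one χ w
  nlinarith

/-- Global `χ`-completeness provides vertex cut-offs with values in `[0, 1]` whose first-order
differences, rather than the gradients of their averages, are controlled in every degree. -/
theorem exists_cutoffs (h1 : GloballyChiCompleteOn W Λ) :
    ∃ (χ : ℕ → V → ℝ) (K : ℝ), 0 ≤ K ∧ (∀ k v, 0 ≤ χ k v) ∧ (∀ k v, χ k v ≤ 1) ∧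
      (∀ k, (Function.support (χ k)).Finite) ∧ (∀ v ∈ Λ, ∀ᶠ k in atTop, χ k v = 1) ∧
      ∀ k j, j + 1 ≤ n → ∀ x : Fin (j + 1) → V, IsSimplex G x → (∀ a, x a ∈ Λ) →
        ∑ y ∈ nbr G (x 0), Λ.indicator
          (fun y => W.m (j + 1) (Fin.snoc x y) * (χ k (x 0) - χ k y) ^ 2) y ≤ K * W.m j x := by
  obtain ⟨O, χ, -, hmono, -, hex, hsupp, hone, C, hC, hgrad⟩ := h1
  have hO : ∀ v ∈ Λ, ∀ᶠ k in atTop, v ∈ O k := by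
    intro v hv
    rw [← hex] at hv
    obtain ⟨k, hk⟩ := Set.mem_iUnion.1 hv
    filter_upwards [eventually_ge_atTop k] with l hl using hmono hl hk
  have hone0 : ∀ k, ∀ v ∈ Λ, v ∈ O k → χ k v = 1 := by
    intro k v hv hvk
    have := hone k 0 (Nat.zero_le _) (fun _ => v) (isSimplex_zero G _) (fun _ => hv) (fun _ => hvk)
    simpa [avg] using this
  refine ⟨fun k => clamp (χ k), ((n : ℝ) + 1) ^ 2 * C, by positivity, fun k => clamp_nonneg _,
    fun k => clamp_le_one _, fun k => (hsupp k).subset fun v hv => ?_, fun v hv => ?_, ?_⟩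
  · intro h
    exact hv (by simp [clamp, h])
  · filter_upwards [hO v hv] with k hk
    simp [clamp, hone0 k v hv hk]
  · intro k j hj x hx hxΛ
    have hm := W.nonneg j x
    have hjn : (j : ℝ) ≤ n := by exact_mod_cast (by omega : j ≤ n)
    by_cases hje : Even j
    · refine le_trans (Finset.sum_le_sum fun y _ => ?_)
        ((grad_even hj hje (hgrad k j hj) hx hxΛ _).trans (by gcongr))
      refine Set.indicator_le_indicator ?_
      exact mul_le_mul_of_nonneg_left (clamp_sub_sq_le _ _ _) (W.nonneg _ _)
    · refine le_trans (Finset.sum_le_sum fun y _ => ?_)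
        ((grad_odd hO hj hje (fun k => hone k j (by omega)) hx hxΛ
          (fun k => hgrad k j hj x hx hxΛ) _).trans ?_)
      · refine Set.indicator_le_indicator ?_
        exact mul_le_of_le_one_right (W.nonneg _ _) (clamp_sub_sq_le_one _ _ _)
      · refine mul_le_mul_of_nonneg_right ?_ hm
        refine le_mul_of_one_le_left hC.le ?_
        nlinarith [Nat.cast_nonneg (α := ℝ) n]

end cutoffs

/-! ### Commutators of `d` and `δ` with the cut-offs -/

/-- Extension of a vertex function to tuples by taking the minimum over the vertices.  In contrast
to the average, appending a vertex `y` to `x` changes it by at most `|χ (x 0) - χ y|`. -/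
noncomputable def low (χ : V → ℝ) {k : ℕ} (x : Fin k → V) : ℝ := ⨅ j, χ (x j)

/-- Multiplication of a function on tuples by the cut-off `low χ`. -/
noncomputable def mulLow (χ : V → ℝ) {k : ℕ} (f : (Fin k → V) → ℂ) : (Fin k → V) → ℂ :=
  fun x => ((low χ x : ℝ) : ℂ) * f x

section low

variable (χ : V → ℝ) {i k : ℕ}

theorem low_le (x : Fin k → V) (j : Fin k) : low χ x ≤ χ (x j) :=
  ciInf_le (Set.finite_range _).bddBelow j

theorem exists_low_eq (x : Fin (i + 1) → V) : ∃ j, low χ x = χ (x j) := by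
  obtain ⟨j, hj⟩ := exists_eq_ciInf_of_finite (f := fun j => χ (x j))
  exact ⟨j, hj.symm⟩

theorem low_perm (x : Fin k → V) (σ : Equiv.Perm (Fin k)) : low χ (x ∘ σ) = low χ x :=
  σ.iInf_comp (g := fun j => χ (x j))

theorem low_snoc_sub_sq_le (x : Fin (i + 1) → V) (y : V) :
    (low χ x - low χ (Fin.snoc x y : Fin (i + 2) → V)) ^ 2 ≤ (χ (x 0) - χ y) ^ 2 := by
  have h1 : low χ (Fin.snoc x y : Fin (i + 2) → V) ≤ low χ x := by
    obtain ⟨j, hj⟩ := exists_low_eq χ x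
    have := low_le χ (Fin.snoc x y : Fin (i + 2) → V) j.castSucc
    rwa [Fin.snoc_castSucc, ← hj] at this
  have h0 := low_le χ x 0
  obtain ⟨j, hj⟩ := exists_low_eq χ (Fin.snoc x y : Fin (i + 2) → V)
  rw [hj] at h1 ⊢
  induction j using Fin.lastCases with
  | last =>
    rw [Fin.snoc_last] at h1 ⊢
    nlinarith
  | cast b =>
    rw [Fin.snoc_castSucc] at h1 ⊢
    have := low_le χ x b
    rw [le_antisymm h1 this, sub_self, zero_pow two_ne_zero]
    exact sq_nonneg _

theorem low_insertNth (p : Fin (k + 1)) (y : V) (x : Fin k → V) :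
    low χ (p.insertNth y x : Fin (k + 1) → V) = low χ (Fin.snoc x y : Fin (k + 1) → V) := by
  obtain ⟨τ, h, -⟩ := insertNth_eq_snoc_comp p y x
  rw [h, low_perm]

variable {χ}

theorem low_nonneg (h0 : ∀ v, 0 ≤ χ v) (x : Fin (i + 1) → V) : 0 ≤ low χ x := by
  obtain ⟨j, hj⟩ := exists_low_eq χ x
  rw [hj]; exact h0 _

theorem low_le_one (h1 : ∀ v, χ v ≤ 1) (x : Fin (i + 1) → V) : low χ x ≤ 1 :=
  (low_le χ x 0).trans (h1 _)

theorem low_eq_one {x : Fin (i + 1) → V} (h : ∀ j, χ (x j) = 1) : low χ x = 1 := by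
  obtain ⟨j, hj⟩ := exists_low_eq χ x
  rw [hj, h]

theorem IsCochain.mulLow {G : WG V} {f : (Fin (i + 1) → V) → ℂ} (hf : IsCochain G i f)
    (χ : V → ℝ) : IsCochain G i (mulLow χ f) := by
  refine ⟨fun x σ => ?_, fun x hx => ?_⟩
  · simp only [DiscreteHodge.mulLow, low_perm, hf.1 x σ]
    ring
  · simp [DiscreteHodge.mulLow, hf.2 x hx]

theorem finite_support_mulLow (h0 : ∀ v, 0 ≤ χ v) (hs : (Function.support χ).Finite)
    (f : (Fin (i + 1) → V) → ℂ) : (Function.support (mulLow χ f)).Finite := by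
  refine (Set.Finite.pi' (fun _ : Fin (i + 1) => hs)).subset fun x hx j hj => hx ?_
  have h1 := low_le χ x j
  rw [hj] at h1
  simp [mulLow, le_antisymm h1 (low_nonneg h0 x)]

theorem pin_mulLow (Λ : Set V) (χ : V → ℝ) (f : (Fin k → V) → ℂ) :
    pin Λ (mulLow χ f) = mulLow χ (pin Λ f) := by
  funext x
  by_cases hx : ∀ j, x j ∈ Λ
  · simp only [mulLow, pin_of_mem Λ _ hx]
  · simp only [mulLow, pin_of_not_mem Λ _ hx, mul_zero]

end low

section commutators

variable {G : WG V} {n : ℕ} {W : CliqueWeights G n} {Λ : Set V}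

theorem tsum_insertNth {i : ℕ} (p : Fin (i + 1)) (F : (Fin (i + 1) → V) → ENNReal) :
    ∑' z, F z = ∑' (x : Fin i → V) (y : V), F (p.insertNth y x : Fin (i + 1) → V) := by
  rw [← (Fin.insertNthEquiv (fun _ => V) p).tsum_eq, ENNReal.tsum_prod', ENNReal.tsum_comm]
  rfl

variable {χ : ℕ → V → ℝ} {K : ℝ}

theorem eventually_low_eq_one (hev : ∀ v ∈ Λ, ∀ᶠ k in atTop, χ k v = 1) {i : ℕ}
    {x : Fin (i + 1) → V} (hx : ∀ j, x j ∈ Λ) : ∀ᶠ k in atTop, low (χ k) x = 1 := by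
  have h1 : ∀ᶠ k in atTop, ∀ a, χ k (x a) = 1 := eventually_all.2 fun a => hev _ (hx a)
  filter_upwards [h1] with k hk using low_eq_one hk

/-- The cut-offs converge strongly to the identity on the functions over `Λ`. -/
theorem tendsto_mulLow (h0 : ∀ k v, 0 ≤ χ k v) (h1 : ∀ k v, χ k v ≤ 1)
    (hev : ∀ v ∈ Λ, ∀ᶠ k in atTop, χ k v = 1) {i : ℕ} {f : (Fin (i + 1) → V) → ℂ}
    (hf : energy W i f ≠ ⊤) :
    Tendsto (fun k => energy W i (fun x => mulLow (χ k) (pin Λ f) x - pin Λ f x)) atTop (𝓝 0) := by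
  refine tendsto_tsum_zero_of_dominated hf (fun k x => ENNReal.ofReal_le_ofReal ?_) fun x => ?_
  · refine mul_le_mul_of_nonneg_left ?_ (W.nonneg _ _)
    have e : mulLow (χ k) (pin Λ f) x - pin Λ f x
        = ((low (χ k) x - 1 : ℝ) : ℂ) * pin Λ f x := by
      simp only [mulLow]; push_cast; ring
    beta_reduce
    rw [e, norm_mul, Complex.norm_real, Real.norm_eq_abs]
    have h2 := low_nonneg (h0 k) x
    have h3 := low_le_one (h1 k) x
    have h4 : |low (χ k) x - 1| ≤ 1 := by rw [abs_le]; constructor <;> linarith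
    gcongr
    exact (mul_le_of_le_one_left (norm_nonneg _) h4).trans (norm_pin_le Λ f x)
  · by_cases hx : ∀ j, x j ∈ Λ
    · filter_upwards [eventually_low_eq_one hev hx] with k hk
      simp [mulLow, hk]
    · refine Eventually.of_forall fun k => ?_
      simp [mulLow, pin_of_not_mem Λ f hx]

/-- The gradient of the simplicial cut-off `low χ` over `Λ`, summed over the cofaces of `x`. -/
noncomputable def gradLow (W : CliqueWeights G n) (Λ : Set V) (χ : V → ℝ) {i : ℕ}
    (x : Fin (i + 1) → V) : ℝ :=
  ∑ y ∈ nbr G (x 0), Λ.indicator (fun y => W.m (i + 1) (Fin.snoc x y) *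
    (low χ x - low χ (Fin.snoc x y : Fin (i + 2) → V)) ^ 2) y

theorem gradLow_nonneg (χ : V → ℝ) {i : ℕ} (x : Fin (i + 1) → V) : 0 ≤ gradLow W Λ χ x :=
  Finset.sum_nonneg fun _ _ =>
    Set.indicator_nonneg (fun _ _ => mul_nonneg (W.nonneg _ _) (sq_nonneg _)) _

theorem gradLow_le (hgrad : ∀ k j, j + 1 ≤ n → ∀ x : Fin (j + 1) → V, IsSimplex G x →
      (∀ a, x a ∈ Λ) → ∑ y ∈ nbr G (x 0), Λ.indicator
        (fun y => W.m (j + 1) (Fin.snoc x y) * (χ k (x 0) - χ k y) ^ 2) y ≤ K * W.m j x)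
    {i : ℕ} (hi : i + 1 ≤ n) (k : ℕ) {x : Fin (i + 1) → V} (hx : IsSimplex G x)
    (hxΛ : ∀ a, x a ∈ Λ) : gradLow W Λ (χ k) x ≤ K * W.m i x := by
  refine le_trans (Finset.sum_le_sum fun y _ => ?_) (hgrad k i hi x hx hxΛ)
  refine Set.indicator_le_indicator ?_
  exact mul_le_mul_of_nonneg_left (low_snoc_sub_sq_le _ _ _) (W.nonneg _ _)

theorem eventually_gradLow_eq_zero (hev : ∀ v ∈ Λ, ∀ᶠ k in atTop, χ k v = 1) {i : ℕ}
    {x : Fin (i + 1) → V} (hx : ∀ j, x j ∈ Λ) : ∀ᶠ k in atTop, gradLow W Λ (χ k) x = 0 := by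
  have h : ∀ᶠ k in atTop, ∀ y ∈ nbr G (x 0), y ∈ Λ →
      low (χ k) (Fin.snoc x y : Fin (i + 2) → V) = 1 := by
    refine (Finset.eventually_all _).2 fun y _ => ?_
    by_cases hy : y ∈ Λ
    · filter_upwards [eventually_low_eq_one hev (forall_snoc_mem hx hy)] with k hk _ using hk
    · exact Eventually.of_forall fun k hk => absurd hk hy
  filter_upwards [h, eventually_low_eq_one hev hx] with k hk1 hk2
  refine Finset.sum_eq_zero fun y hy => ?_
  by_cases hyΛ : y ∈ Λ
  · rw [Set.indicator_of_mem hyΛ, hk1 y hy hyΛ, hk2]; simp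
  · exact Set.indicator_of_notMem hyΛ _

/-- The commutator of `d` with the cut-off, at a simplex. -/
theorem d_mulLow_sub (χ : V → ℝ) {i : ℕ} (f : (Fin (i + 1) → V) → ℂ) {z : Fin (i + 2) → V}
    (hz : IsSimplex G z) : d G i (mulLow χ f) z - mulLow χ (d G i f) z
      = ∑ p : Fin (i + 2), (-1 : ℂ) ^ (p : ℕ) *
          (((low χ (p.removeNth z) - low χ z : ℝ) : ℂ) * f (p.removeNth z)) := by
  rw [mulLow, d_of_simplex _ hz, d_of_simplex _ hz, Finset.mul_sum, ← Finset.sum_sub_distrib]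
  refine Finset.sum_congr rfl fun p _ => ?_
  change (-1 : ℂ) ^ (p : ℕ) * (((low χ (p.removeNth z) : ℝ) : ℂ) * f (p.removeNth z))
    - ((low χ z : ℝ) : ℂ) * ((-1 : ℂ) ^ (p : ℕ) * f (p.removeNth z)) = _
  push_cast
  ring

/-- The energy of the commutator `[d, low χ]` over `Λ` is controlled by a weighted energy, the
weight being the gradient of the cut-off. -/
theorem energy_commutator_d_le (χ : V → ℝ) {i : ℕ} (hi : i + 1 ≤ n)
    (f : (Fin (i + 1) → V) → ℂ) :
    energy W (i + 1) (pin Λ fun z => d G i (mulLow χ (pin Λ f)) z - mulLow χ (d G i (pin Λ f)) z)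
      ≤ ENNReal.ofReal (((i + 2 : ℕ) : ℝ) ^ 2) *
        ∑' x : Fin (i + 1) → V, ENNReal.ofReal (gradLow W Λ χ x * ‖pin Λ f x‖ ^ 2) := by
  classical
  set g := pin Λ f
  -- the contribution of the face opposite to the vertex in position `p`
  let T : Fin (i + 2) → (Fin (i + 2) → V) → ℝ := fun p z =>
    Set.indicator {z : Fin (i + 2) → V | ∀ j, z j ∈ Λ} (fun z => W.m (i + 1) z *
      ((low χ (p.removeNth z) - low χ z) ^ 2 * ‖g (p.removeNth z)‖ ^ 2)) z
  have hT0 : ∀ p z, 0 ≤ T p z := fun p z => Set.indicator_nonneg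
    (fun z _ => mul_nonneg (W.nonneg _ _) (mul_nonneg (sq_nonneg _) (sq_nonneg _))) z
  have hpt : ∀ z : Fin (i + 2) → V,
      W.m (i + 1) z * ‖pin Λ (fun z => d G i (mulLow χ g) z - mulLow χ (d G i g) z) z‖ ^ 2
        ≤ ((i + 2 : ℕ) : ℝ) * ∑ p, T p z := by
    intro z
    have hnn : 0 ≤ ((i + 2 : ℕ) : ℝ) * ∑ p, T p z :=
      mul_nonneg (Nat.cast_nonneg _) (Finset.sum_nonneg fun p _ => hT0 p z)
    by_cases hzΛ : ∀ j, z j ∈ Λ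
    · by_cases hm : W.m (i + 1) z = 0
      · rw [hm, zero_mul]; exact hnn
      · have hz := isSimplex_of_m_ne_zero hi hm
        have hT : ∀ p, T p z = W.m (i + 1) z *
            ((low χ (p.removeNth z) - low χ z) ^ 2 * ‖g (p.removeNth z)‖ ^ 2) := fun p =>
          Set.indicator_of_mem (s := {z : Fin (i + 2) → V | ∀ j, z j ∈ Λ}) hzΛ _
        simp only [hT]
        rw [pin_of_mem Λ _ hzΛ, d_mulLow_sub χ g hz, ← Finset.mul_sum, mul_left_comm]
        refine mul_le_mul_of_nonneg_left ?_ (W.nonneg _ _)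
        calc _ ≤ (∑ p : Fin (i + 2), |low χ (p.removeNth z) - low χ z| *
              ‖g (p.removeNth z)‖) ^ 2 := by
              refine pow_le_pow_left₀ (norm_nonneg _) ((norm_sum_le _ _).trans
                (le_of_eq (Finset.sum_congr rfl fun p _ => ?_))) 2
              rw [norm_mul, norm_pow, norm_neg, norm_one, one_pow, one_mul, norm_mul,
                Complex.norm_real, Real.norm_eq_abs]
          _ ≤ _ := by
              refine (sq_sum_le_card_mul_sum_sq).trans (le_of_eq ?_)
              simp only [Finset.card_univ, Fintype.card_fin, mul_pow, sq_abs]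
    · rw [pin_of_not_mem Λ _ hzΛ]
      simpa using hnn
  have hslice : ∀ p, ∑' z, ENNReal.ofReal (T p z)
      = ∑' x : Fin (i + 1) → V, ENNReal.ofReal (gradLow W Λ χ x * ‖g x‖ ^ 2) := by
    intro p
    rw [tsum_insertNth p]
    refine tsum_congr fun x => ?_
    have hTy : ∀ y, T p (p.insertNth y x : Fin (i + 2) → V)
        = Λ.indicator (fun y => W.m (i + 1) (Fin.snoc x y) *
          (low χ x - low χ (Fin.snoc x y : Fin (i + 2) → V)) ^ 2) y * ‖g x‖ ^ 2 := by
      intro y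
      by_cases hxΛ : ∀ j, x j ∈ Λ
      · by_cases hy : y ∈ Λ
        · have hz : (p.insertNth y x : Fin (i + 2) → V) ∈
              {z : Fin (i + 2) → V | ∀ j, z j ∈ Λ} := fun j => by
            induction j using Fin.succAboveCases p with
            | x => simpa using hy
            | p j => simpa using hxΛ j
          simp only [T]
          rw [Set.indicator_of_mem hz, Set.indicator_of_mem hy, Fin.removeNth_insertNth,
            low_insertNth, W.m_insertNth hi]
          ring
        · have hz : (p.insertNth y x : Fin (i + 2) → V) ∉
              {z : Fin (i + 2) → V | ∀ j, z j ∈ Λ} := fun h => hy (by simpa using h p)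
          simp only [T]
          rw [Set.indicator_of_notMem hz, Set.indicator_of_notMem hy, zero_mul]
      · have hz : (p.insertNth y x : Fin (i + 2) → V) ∉
            {z : Fin (i + 2) → V | ∀ j, z j ∈ Λ} := fun h => hxΛ fun j => by
          simpa using h (p.succAbove j)
        simp only [T]
        rw [Set.indicator_of_notMem hz, show g x = 0 from pin_of_not_mem Λ f hxΛ]
        simp
    simp only [hTy]
    rw [tsum_eq_sum (s := nbr G (x 0)), ← ENNReal.ofReal_sum_of_nonneg, ← Finset.sum_mul]
    · rfl
    · exact fun y _ => by rw [← hTy]; exact hT0 _ _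
    · intro y hy
      by_cases hyΛ : y ∈ Λ
      · rw [Set.indicator_of_mem hyΛ, m_snoc_eq_zero W hi hy]; simp
      · rw [Set.indicator_of_notMem hyΛ]; simp
  calc _ ≤ ∑' z, ENNReal.ofReal (((i + 2 : ℕ) : ℝ)) * ∑ p, ENNReal.ofReal (T p z) := by
        refine ENNReal.tsum_le_tsum fun z => (ENNReal.ofReal_le_ofReal (hpt z)).trans ?_
        rw [ENNReal.ofReal_mul (Nat.cast_nonneg _),
          ENNReal.ofReal_sum_of_nonneg fun p _ => hT0 p z]
    _ = ENNReal.ofReal (((i + 2 : ℕ) : ℝ)) * ∑ p : Fin (i + 2), ∑' z, ENNReal.ofReal (T p z) := by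
        rw [ENNReal.tsum_mul_left, Summable.tsum_finsetSum fun _ _ => ENNReal.summable]
    _ = _ := by
        simp only [hslice, Finset.sum_const, Finset.card_univ, Fintype.card_fin, nsmul_eq_mul]
        rw [← mul_assoc, pow_two, ENNReal.ofReal_mul (Nat.cast_nonneg _), ENNReal.ofReal_natCast]

theorem tendsto_commutator_d (hK : 0 ≤ K) (hev : ∀ v ∈ Λ, ∀ᶠ k in atTop, χ k v = 1)
    (hgrad : ∀ k j, j + 1 ≤ n → ∀ x : Fin (j + 1) → V, IsSimplex G x →
      (∀ a, x a ∈ Λ) → ∑ y ∈ nbr G (x 0), Λ.indicator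
        (fun y => W.m (j + 1) (Fin.snoc x y) * (χ k (x 0) - χ k y) ^ 2) y ≤ K * W.m j x)
    {i : ℕ} (hi : i + 1 ≤ n) {f : (Fin (i + 1) → V) → ℂ} (hf : IsCochain G i f)
    (hfE : energy W i f ≠ ⊤) :
    Tendsto (fun k => energy W (i + 1) (pin Λ fun z =>
      d G i (mulLow (χ k) (pin Λ f)) z - mulLow (χ k) (d G i (pin Λ f)) z)) atTop (𝓝 0) := by
  refine tendsto_zero_of_le_const_mul ENNReal.ofReal_ne_top ?_
    (fun k => energy_commutator_d_le (χ k) hi f)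
  refine tendsto_tsum_zero_of_dominated
    (b := fun x => ENNReal.ofReal K * ENNReal.ofReal (W.m i x * ‖f x‖ ^ 2)) ?_ (fun k x => ?_)
    fun x => ?_
  · rw [ENNReal.tsum_mul_left]
    exact ENNReal.mul_ne_top ENNReal.ofReal_ne_top hfE
  · rw [← ENNReal.ofReal_mul hK]
    refine ENNReal.ofReal_le_ofReal ?_
    have hnn : 0 ≤ K * (W.m i x * ‖f x‖ ^ 2) :=
      mul_nonneg hK (mul_nonneg (W.nonneg _ _) (sq_nonneg _))
    by_cases hxΛ : ∀ j, x j ∈ Λ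
    · by_cases hx : IsSimplex G x
      · rw [pin_of_mem Λ f hxΛ, ← mul_assoc]
        exact mul_le_mul_of_nonneg_right (gradLow_le hgrad hi k hx hxΛ) (sq_nonneg _)
      · rw [pin_of_mem Λ f hxΛ, hf.2 x hx]; simp
    · rw [pin_of_not_mem Λ f hxΛ]; simpa using hnn
  · by_cases hxΛ : ∀ j, x j ∈ Λ
    · filter_upwards [eventually_gradLow_eq_zero (W := W) hev hxΛ] with k hk
      rw [hk]; simp
    · exact Eventually.of_forall fun k => by rw [pin_of_not_mem Λ f hxΛ]; simp

/-- The commutator of `δ` with the cut-off, on functions over `Λ`. -/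
theorem delta_mulLow_sub (χ : V → ℝ) {i : ℕ} (hi : i + 1 ≤ n) (g : (Fin (i + 2) → V) → ℂ)
    (x : Fin (i + 1) → V) :
    delta G W i (mulLow χ g) x - mulLow χ (delta G W i g) x
      = ((W.m i x : ℝ) : ℂ)⁻¹ * ∑ y ∈ nbr G (x 0), ((W.m (i + 1) (Fin.snoc x y) : ℝ) : ℂ) *
        (((low χ (Fin.snoc x y : Fin (i + 2) → V) - low χ x : ℝ) : ℂ) * g (Fin.snoc x y)) := by
  simp only [mulLow, delta_eq W hi]
  rw [mul_left_comm, ← mul_sub, Finset.mul_sum, ← Finset.sum_sub_distrib]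
  congr 1
  refine Finset.sum_congr rfl fun y _ => ?_
  push_cast
  ring

/-- Cauchy–Schwarz for the commutator `[δ, low χ]` at a simplex over `Λ`. -/
theorem commutator_delta_le (χ : V → ℝ) {i : ℕ} (hi : i + 1 ≤ n) (g : (Fin (i + 2) → V) → ℂ)
    {x : Fin (i + 1) → V} (hx : IsSimplex G x) :
    W.m i x * ‖delta G W i (mulLow χ (pin Λ g)) x - mulLow χ (delta G W i (pin Λ g)) x‖ ^ 2
      ≤ (W.m i x)⁻¹ * (gradLow W Λ χ x *
        ∑ y ∈ nbr G (x 0), W.m (i + 1) (Fin.snoc x y) * ‖g (Fin.snoc x y)‖ ^ 2) := by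
  classical
  have hm := (W.m_pos_iff (by omega) x).2 hx
  rw [delta_mulLow_sub χ hi, norm_mul, norm_inv, Complex.norm_real, Real.norm_of_nonneg hm.le,
    mul_pow]
  have e : ∀ S : ℝ, W.m i x * ((W.m i x)⁻¹ ^ 2 * S) = (W.m i x)⁻¹ * S := fun S => by
    field_simp
  rw [e]
  refine mul_le_mul_of_nonneg_left ?_ (by positivity)
  let a : V → ℝ := Λ.indicator fun y => √(W.m (i + 1) (Fin.snoc x y)) *
    |low χ x - low χ (Fin.snoc x y : Fin (i + 2) → V)|
  let b : V → ℝ := fun y => √(W.m (i + 1) (Fin.snoc x y)) * ‖g (Fin.snoc x y)‖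
  have hCS := Finset.sum_mul_sq_le_sq_mul_sq (nbr G (x 0)) a b
  have ha : ∀ y, a y ^ 2 = Λ.indicator (fun y => W.m (i + 1) (Fin.snoc x y) *
      (low χ x - low χ (Fin.snoc x y : Fin (i + 2) → V)) ^ 2) y := by
    intro y
    by_cases hy : y ∈ Λ
    · simp only [a, Set.indicator_of_mem hy, mul_pow, sq_abs, Real.sq_sqrt (W.nonneg _ _)]
    · simp only [a, Set.indicator_of_notMem hy]; simp
  have hb : ∀ y, b y ^ 2 = W.m (i + 1) (Fin.snoc x y) * ‖g (Fin.snoc x y)‖ ^ 2 := fun y => by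
    simp only [b, mul_pow, Real.sq_sqrt (W.nonneg _ _)]
  simp only [ha, hb] at hCS
  refine le_trans (pow_le_pow_left₀ (norm_nonneg _) ?_ 2) hCS
  refine (norm_sum_le _ _).trans (Finset.sum_le_sum fun y _ => ?_)
  rw [norm_mul, norm_mul, Complex.norm_real, Complex.norm_real, Real.norm_of_nonneg (W.nonneg _ _),
    Real.norm_eq_abs, abs_sub_comm]
  by_cases hy : y ∈ Λ
  · simp only [a, b, Set.indicator_of_mem hy]
    have h2 := norm_pin_le Λ g (Fin.snoc x y : Fin (i + 2) → V)
    calc _ ≤ W.m (i + 1) (Fin.snoc x y) * (|low χ x - low χ (Fin.snoc x y : Fin (i + 2) → V)| *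
          ‖g (Fin.snoc x y)‖) := by
          have := W.nonneg (i + 1) (Fin.snoc x y)
          gcongr
      _ = _ := by
          linear_combination (-(|low χ x - low χ (Fin.snoc x y : Fin (i + 2) → V)| *
            ‖g (Fin.snoc x y)‖)) * Real.mul_self_sqrt (W.nonneg (i + 1) (Fin.snoc x y))
  · have hz : ¬ ∀ j, (Fin.snoc x y : Fin (i + 2) → V) j ∈ Λ := fun h => hy (by
      simpa only [Fin.snoc_last] using h (Fin.last _))
    rw [pin_of_not_mem Λ g hz]
    simp [a, Set.indicator_of_notMem hy]

theorem tendsto_commutator_delta (hK : 0 ≤ K) (hev : ∀ v ∈ Λ, ∀ᶠ k in atTop, χ k v = 1)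
    (hgrad : ∀ k j, j + 1 ≤ n → ∀ x : Fin (j + 1) → V, IsSimplex G x →
      (∀ a, x a ∈ Λ) → ∑ y ∈ nbr G (x 0), Λ.indicator
        (fun y => W.m (j + 1) (Fin.snoc x y) * (χ k (x 0) - χ k y) ^ 2) y ≤ K * W.m j x)
    {i : ℕ} (hi : i + 1 ≤ n) {g : (Fin (i + 2) → V) → ℂ} (hg : energy W (i + 1) g ≠ ⊤) :
    Tendsto (fun k => energy W i (pin Λ fun x =>
      delta G W i (mulLow (χ k) (pin Λ g)) x - mulLow (χ k) (delta G W i (pin Λ g)) x))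
      atTop (𝓝 0) := by
  have hb : ∑' x : Fin (i + 1) → V, ENNReal.ofReal K * ∑' y,
      ENNReal.ofReal (W.m (i + 1) (Fin.snoc x y) * ‖g (Fin.snoc x y)‖ ^ 2) ≠ ⊤ := by
    rw [ENNReal.tsum_mul_left]
    refine ENNReal.mul_ne_top ENNReal.ofReal_ne_top ?_
    have h := tsum_insertNth (Fin.last (i + 1))
      (fun z : Fin (i + 2) → V => ENNReal.ofReal (W.m (i + 1) z * ‖g z‖ ^ 2))
    simp only [Fin.insertNth_last'] at h
    rw [← h]
    exact hg
  have hz : ∀ (k : ℕ) (x : Fin (i + 1) → V), (¬ IsSimplex G x ∨ ¬ ∀ j, x j ∈ Λ) →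
      W.m i x * ‖pin Λ (fun x => delta G W i (mulLow (χ k) (pin Λ g)) x
        - mulLow (χ k) (delta G W i (pin Λ g)) x) x‖ ^ 2 = 0 := by
    rintro k x (hx | hx)
    · have : W.m i x = 0 := by
        by_contra h
        exact hx (isSimplex_of_m_ne_zero (by omega) h)
      rw [this, zero_mul]
    · rw [pin_of_not_mem Λ _ hx]; simp
  refine tendsto_tsum_zero_of_dominated hb (fun k x => ?_) fun x => ?_
  · by_cases hx : IsSimplex G x ∧ ∀ j, x j ∈ Λ
    · obtain ⟨hx, hxΛ⟩ := hx
      have hm := (W.m_pos_iff (by omega) x).2 hx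
      have hS : 0 ≤ ∑ y ∈ nbr G (x 0), W.m (i + 1) (Fin.snoc x y) * ‖g (Fin.snoc x y)‖ ^ 2 :=
        Finset.sum_nonneg fun y _ => mul_nonneg (W.nonneg _ _) (sq_nonneg _)
      rw [pin_of_mem Λ _ hxΛ]
      refine (ENNReal.ofReal_le_ofReal (q := K * ∑ y ∈ nbr G (x 0),
        W.m (i + 1) (Fin.snoc x y) * ‖g (Fin.snoc x y)‖ ^ 2) ?_).trans ?_
      · refine (commutator_delta_le (χ k) hi g hx).trans ?_
        rw [inv_mul_le_iff₀ hm, ← mul_assoc, mul_comm (W.m i x)]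
        exact mul_le_mul_of_nonneg_right (gradLow_le hgrad hi k hx hxΛ) hS
      · rw [ENNReal.ofReal_mul hK, ENNReal.ofReal_sum_of_nonneg
          fun y _ => mul_nonneg (W.nonneg _ _) (sq_nonneg _)]
        gcongr
        exact ENNReal.sum_le_tsum _
    · rw [hz k x (by tauto)]; simp
  · by_cases hx : IsSimplex G x ∧ ∀ j, x j ∈ Λ
    · obtain ⟨hx, hxΛ⟩ := hx
      filter_upwards [eventually_gradLow_eq_zero (W := W) hev hxΛ] with k hk
      have h := commutator_delta_le (W := W) (Λ := Λ) (χ k) hi g hx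
      rw [hk, zero_mul, mul_zero] at h
      rw [pin_of_mem Λ _ hxΛ]
      exact ENNReal.ofReal_of_nonpos h
    · exact Eventually.of_forall fun k => by rw [hz k x (by tauto)]; simp

end commutators

/-! ### Approximation inside the region -/

section inner

variable {G : WG V} {n : ℕ} {W : CliqueWeights G n} {Λ : Set V}

theorem pin_pin {k : ℕ} (f : (Fin k → V) → ℂ) : pin Λ (pin Λ f) = pin Λ f := by
  funext x
  by_cases hx : ∀ j, x j ∈ Λ
  · rw [pin_of_mem Λ _ hx]
  · rw [pin_of_not_mem Λ _ hx, pin_of_not_mem Λ _ hx]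

theorem pin_pout {k : ℕ} (f : (Fin k → V) → ℂ) : pin Λ (pout Λ f) = 0 := by
  funext x
  by_cases hx : ∀ j, x j ∈ Λ
  · rw [pin_of_mem Λ _ hx, pout_of_mem Λ _ hx]; rfl
  · rw [pin_of_not_mem Λ _ hx]; rfl

theorem pout_eq_self_of_pin_eq_zero {k : ℕ} {f : (Fin k → V) → ℂ} (h : pin Λ f = 0) :
    pout Λ f = f := by
  funext x; simp [pout, h]

theorem pout_eq_zero_of_pin_eq_self {k : ℕ} {f : (Fin k → V) → ℂ} (h : pin Λ f = f) :
    pout Λ f = 0 := by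
  funext x; simp [pout, h]

theorem mulLow_zero (χ : V → ℝ) {k : ℕ} : mulLow χ (0 : (Fin k → V) → ℂ) = 0 := by
  funext x; simp [mulLow]

/-- The difference between `D_in` of a truncated family and `D_in u` consists of the two
commutators and the truncation error of `D_in u`. -/
theorem Din_mulLow_sub {u : ∀ i : ℕ, (Fin (i + 1) → V) → ℂ} (χ : V → ℝ) {i : ℕ} (hi : i + 1 ≤ n)
    (x : Fin (i + 2) → V) :
    Din G W Λ (fun i => mulLow χ (pin Λ (u i))) (i + 1) x - Din G W Λ u (i + 1) x
      = (pin Λ (fun z => d G i (mulLow χ (pin Λ (u i))) z - mulLow χ (d G i (pin Λ (u i))) z) x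
        + pin Λ (fun z => delta G W (i + 1) (mulLow χ (pin Λ (u (i + 2)))) z
          - mulLow χ (delta G W (i + 1) (pin Λ (u (i + 2)))) z) x)
        + (mulLow χ (pin Λ (Din G W Λ u (i + 1))) x - pin Λ (Din G W Λ u (i + 1)) x) := by
  have hp : projIn Λ (fun i => mulLow χ (pin Λ (u i))) = fun i => mulLow χ (pin Λ (u i)) := by
    funext i
    exact (pin_mulLow Λ χ _).trans (by rw [pin_pin])
  have e1 : Din G W Λ (fun i => mulLow χ (pin Λ (u i))) (i + 1)
      = pin Λ (Dop G W (fun i => mulLow χ (pin Λ (u i))) (i + 1)) := by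
    conv_lhs => rw [Din, hp]
    rfl
  have e2 : Din G W Λ u (i + 1) = pin Λ (Dop G W (fun i => pin Λ (u i)) (i + 1)) := rfl
  rw [e1, e2, pin_pin, Dop_succ W _ hi, Dop_succ W _ hi]
  by_cases hx : ∀ j, x j ∈ Λ
  · simp only [mulLow, pin_of_mem Λ _ hx]
    ring
  · simp only [mulLow, pin_of_not_mem Λ _ hx]
    ring

theorem Din_mulLow_sub_zero {u : ∀ i : ℕ, (Fin (i + 1) → V) → ℂ} (χ : V → ℝ)
    (x : Fin 1 → V) :
    Din G W Λ (fun i => mulLow χ (pin Λ (u i))) 0 x - Din G W Λ u 0 x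
      = pin Λ (fun z => delta G W 0 (mulLow χ (pin Λ (u 1))) z
          - mulLow χ (delta G W 0 (pin Λ (u 1))) z) x
        + (mulLow χ (pin Λ (Din G W Λ u 0)) x - pin Λ (Din G W Λ u 0) x) := by
  have hp : projIn Λ (fun i => mulLow χ (pin Λ (u i))) = fun i => mulLow χ (pin Λ (u i)) := by
    funext i
    exact (pin_mulLow Λ χ _).trans (by rw [pin_pin])
  have e1 : Din G W Λ (fun i => mulLow χ (pin Λ (u i))) 0
      = pin Λ (Dop G W (fun i => mulLow χ (pin Λ (u i))) 0) := by
    conv_lhs => rw [Din, hp]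
    rfl
  have e2 : Din G W Λ u 0 = pin Λ (Dop G W (fun i => pin Λ (u i)) 0) := rfl
  rw [e1, e2, pin_pin, Dop_zero, Dop_zero]
  by_cases hx : ∀ j, x j ∈ Λ
  · simp only [mulLow, pin_of_mem Λ _ hx]
    ring
  · simp only [mulLow, pin_of_not_mem Λ _ hx]
    ring

/-- Essential self-adjointness of `D_in`: the truncations of `P u` converge to it in the graph
norm. -/
theorem exists_inner_approx (h1 : GloballyChiCompleteOn W Λ)
    {u : ∀ i : ℕ, (Fin (i + 1) → V) → ℂ} (hu : CochainFamily G n u)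
    (hE : ∀ i, energy W i (u i) ≠ ⊤) (hD : ∀ i, energy W i (Din G W Λ u i) ≠ ⊤) :
    ∃ w : ℕ → ∀ i : ℕ, (Fin (i + 1) → V) → ℂ,
      (∀ k, CochainFamily G n (w k) ∧ FinSuppFamily (w k) ∧ ∀ i, pin Λ (w k i) = w k i) ∧
      (∀ i, Tendsto (fun k => energy W i (fun x => w k i x - pin Λ (u i) x)) atTop (𝓝 0)) ∧
      ∀ i, Tendsto (fun k => energy W i (fun x => Din G W Λ (w k) i x - Din G W Λ u i x))
        atTop (𝓝 0) := by
  obtain ⟨χ, K, hK, h0, hle, hsupp, hev, hgrad⟩ := exists_cutoffs h1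
  have hδ : ∀ i, Tendsto (fun k => energy W i (pin Λ fun x =>
      delta G W i (mulLow (χ k) (pin Λ (u (i + 1)))) x
        - mulLow (χ k) (delta G W i (pin Λ (u (i + 1)))) x)) atTop (𝓝 0) := by
    intro i
    by_cases hi : i + 1 ≤ n
    · exact tendsto_commutator_delta hK hev hgrad hi (hE (i + 1))
    · have h : ∀ k, energy W i (pin Λ fun x => delta G W i (mulLow (χ k) (pin Λ (u (i + 1)))) x
          - mulLow (χ k) (delta G W i (pin Λ (u (i + 1)))) x) = 0 := by
        intro k
        rw [hu.2 (i + 1) (by omega), pin_zero, mulLow_zero, delta_zero, mulLow_zero]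
        simp only [sub_self]
        exact (congrArg (energy W i) (pin_zero Λ)).trans (energy_zero W)
      simp only [h]
      exact tendsto_const_nhds
  refine ⟨fun k i => mulLow (χ k) (pin Λ (u i)), fun k => ⟨⟨fun i => ((hu.1 i).pin Λ).mulLow _,
    fun i hi => ?_⟩, fun i => finite_support_mulLow (h0 k) (hsupp k) _, fun i => ?_⟩,
    fun i => tendsto_mulLow h0 hle hev (hE i), fun i => ?_⟩
  · simp only [hu.2 i hi, pin_zero, mulLow_zero]
  · rw [pin_mulLow, pin_pin]
  · rcases i with _ | i
    · refine tendsto_zero_of_le_two_mul_add (hδ 0) (tendsto_mulLow h0 hle hev (hD 0)) fun k => ?_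
      simp only [Din_mulLow_sub_zero]
      exact energy_add_le W _ _
    · by_cases hi : i + 1 ≤ n
      · have hd := tendsto_commutator_d hK hev hgrad hi (hu.1 i) (hE i)
        have hdδ := tendsto_zero_of_le_two_mul_add hd (hδ (i + 1)) fun k => energy_add_le W _ _
        refine tendsto_zero_of_le_two_mul_add hdδ (tendsto_mulLow h0 hle hev (hD (i + 1)))
          fun k => ?_
        simp only [Din_mulLow_sub _ hi]
        exact energy_add_le W _ _
      · have h : ∀ v : ∀ i : ℕ, (Fin (i + 1) → V) → ℂ, Din G W Λ v (i + 1) = 0 := fun v => by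
          change pin Λ (Dop G W (projIn Λ v) (i + 1)) = 0
          rw [Dop_of_lt W _ (by omega), pin_zero]
        simp only [h, Pi.zero_apply, sub_self]
        have : energy W (i + 1) (fun _ : Fin (i + 2) → V => (0 : ℂ)) = 0 := energy_zero W
        simp only [this]
        exact tendsto_const_nhds

end inner

/-! ### Assembling the blocks -/

section assembly

variable {G : WG V} {n : ℕ} {W : CliqueWeights G n} {Λ : Set V}

theorem finite_support_pout {k : ℕ} {f : (Fin k → V) → ℂ} (hf : (Function.support f).Finite) :
    (Function.support (pout Λ f)).Finite := by
  refine hf.subset fun x hx hfx => hx ?_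
  have := norm_pout_le Λ f x
  rw [hfx, norm_zero] at this
  exact norm_le_zero_iff.1 this

theorem finite_support_Dop {u : ∀ i : ℕ, (Fin (i + 1) → V) → ℂ} (h0 : ∀ i, n < i → u i = 0)
    (hu : FinSuppFamily u) (i : ℕ) : (Function.support (Dop G W u i)).Finite := by
  have hδ : ∀ i, (Function.support (delta G W i (u (i + 1)))).Finite := by
    intro i
    by_cases hi : i + 1 ≤ n
    · exact finite_support_delta W hi (hu _)
    · rw [h0 _ (by omega), delta_zero]; simp
  rcases i with _ | i
  · exact hδ 0
  · by_cases hi : i + 1 ≤ n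
    · rw [Dop_succ W _ hi]
      exact ((finite_support_d G (hu i)).union (hδ (i + 1))).subset (Function.support_add _ _)
    · rw [Dop_of_lt W _ (by omega)]; simp

variable {M : ℝ}

theorem energy_Coup_le
    (hK : ∀ i, i + 1 ≤ n → ∀ g : (Fin (i + 2) → V) → ℂ, IsCochain G (i + 1) g →
      (Function.support g).Finite →
      energy W i (cpl W Λ i g) ≤ ENNReal.ofReal M * energy W (i + 1) g)
    {u : ∀ i : ℕ, (Fin (i + 1) → V) → ℂ} (hu : CochainFamily G n u) (i : ℕ) :
    energy W i (Coup G W Λ u i) ≤ ENNReal.ofReal M * energy W (i + 1) (u (i + 1)) := by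
  by_cases hi : i + 1 ≤ n
  · rw [Coup_eq W Λ u (by omega)]
    exact cpl_bound hi (hK i hi) (hu.1 (i + 1))
  · by_cases hi' : i ≤ n
    · rw [Coup_eq W Λ u hi', hu.2 (i + 1) (by omega), cpl_zero, energy_zero]
      exact zero_le
    · rw [Coup_of_lt W Λ u (by omega), energy_zero]
      exact zero_le

theorem Coup_sub {u v : ∀ i : ℕ, (Fin (i + 1) → V) → ℂ} (hu : ∀ i, n < i → u i = 0)
    (hv : ∀ i, n < i → v i = 0) (i : ℕ) (x : Fin (i + 1) → V) :
    Coup G W Λ (fun i x => u i x - v i x) i x = Coup G W Λ u i x - Coup G W Λ v i x := by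
  by_cases hi' : i ≤ n
  · simp only [Coup_eq W Λ _ hi']
    by_cases hi : i + 1 ≤ n
    · exact cpl_sub W Λ hi _ _ x
    · rw [hu _ (by omega), hv _ (by omega)]
      simp only [Pi.zero_apply, sub_self]
      exact congrFun (cpl_zero W Λ i) x
  · simp [Coup_of_lt W Λ _ (Nat.not_le.1 hi')]

theorem energy_cross_le (hn : 1 ≤ n) (hM : 0 ≤ M)
    (hK : ∀ i, i + 1 ≤ n → ∀ g : (Fin (i + 2) → V) → ℂ, IsCochain G (i + 1) g →
      (Function.support g).Finite →
      energy W i (cpl W Λ i g) ≤ ENNReal.ofReal M * energy W (i + 1) g)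
    {u : ∀ i : ℕ, (Fin (i + 1) → V) → ℂ} (hu : CochainFamily G n u)
    (hE : ∀ i, energy W i (u i) ≠ ⊤) (i : ℕ) :
    energy W i (projOut Λ (Dop G W (projIn Λ u)) i)
      ≤ ENNReal.ofReal (((i + 1 : ℕ) : ℝ) ^ 2 * M) * energy W (i - 1) (u (i - 1)) := by
  rcases i with _ | i
  · rw [cross_zero W Λ hn, energy_zero]
    exact zero_le
  · by_cases hi : i + 1 ≤ n
    · rw [cross_succ W Λ hu.2 hi]
      exact cst_bound hM hi (hK i hi) (hu.1 i) (hE i)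
    · rw [cross_of_lt W Λ u (by omega), energy_zero]
      exact zero_le

theorem cross_sub (hn : 1 ≤ n) {u v : ∀ i : ℕ, (Fin (i + 1) → V) → ℂ}
    (hu : ∀ i, n < i → u i = 0) (hv : ∀ i, n < i → v i = 0) (i : ℕ) (x : Fin (i + 1) → V) :
    projOut Λ (Dop G W (projIn Λ fun i x => u i x - v i x)) i x
      = projOut Λ (Dop G W (projIn Λ u)) i x - projOut Λ (Dop G W (projIn Λ v)) i x := by
  have huv : ∀ i, n < i → (fun x => u i x - v i x) = 0 := fun i hi => by
    rw [hu i hi, hv i hi]; funext x; simp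
  rcases i with _ | i
  · simp [cross_zero W Λ hn]
  · by_cases hi : i + 1 ≤ n
    · rw [cross_succ W Λ hu hi, cross_succ W Λ hv hi,
        cross_succ W Λ (u := fun i x => u i x - v i x) huv hi]
      exact cst_sub Λ _ _ x
    · simp [cross_of_lt W Λ _ (Nat.not_le.1 hi)]

theorem Dop_sub_blocks {u v : ∀ i : ℕ, (Fin (i + 1) → V) → ℂ} (hn : 1 ≤ n)
    (hu : ∀ i, n < i → u i = 0) (hv : ∀ i, n < i → v i = 0) (i : ℕ) (x : Fin (i + 1) → V) :
    Dop G W u i x - Dop G W v i x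
      = ((Din G W Λ u i x - Din G W Λ v i x) + (Dout G W Λ u i x - Dout G W Λ v i x))
        + (Coup G W Λ (fun i x => u i x - v i x) i x
          + projOut Λ (Dop G W (projIn Λ fun i x => u i x - v i x)) i x) := by
  rw [Coup_sub hu hv, cross_sub hn hu hv, Dop_blocks W Λ hu, Dop_blocks W Λ hv]
  ring

/-- On the maximal domain of `D` the diagonal blocks are square-summable, because the
off-diagonal ones are bounded. -/
theorem energy_diag_ne_top (hn : 1 ≤ n) (hM : 0 ≤ M)
    (hK : ∀ i, i + 1 ≤ n → ∀ g : (Fin (i + 2) → V) → ℂ, IsCochain G (i + 1) g →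
      (Function.support g).Finite →
      energy W i (cpl W Λ i g) ≤ ENNReal.ofReal M * energy W (i + 1) g)
    {u : ∀ i : ℕ, (Fin (i + 1) → V) → ℂ} (hu : CochainFamily G n u)
    (hE : ∀ i, energy W i (u i) ≠ ⊤) (hD : ∀ i, energy W i (Dop G W u i) ≠ ⊤) (i : ℕ) :
    energy W i (Din G W Λ u i) ≠ ⊤ ∧ energy W i (Dout G W Λ u i) ≠ ⊤ := by
  have hC : energy W i (Coup G W Λ u i) ≠ ⊤ :=
    ne_top_of_le_ne_top (ENNReal.mul_ne_top ENNReal.ofReal_ne_top (hE _)) (energy_Coup_le hK hu i)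
  have hX : energy W i (projOut Λ (Dop G W (projIn Λ u)) i) ≠ ⊤ :=
    ne_top_of_le_ne_top (ENNReal.mul_ne_top ENNReal.ofReal_ne_top (hE _))
      (energy_cross_le hn hM hK hu hE i)
  have hS := energy_sub_ne_top W (energy_sub_ne_top W (hD i) hX) hC
  have hsplit : ∀ x, Dop G W u i x - projOut Λ (Dop G W (projIn Λ u)) i x - Coup G W Λ u i x
      = Din G W Λ u i x + Dout G W Λ u i x := fun x => by
    rw [Dop_blocks W Λ hu.2]; ring
  simp only [hsplit] at hS
  have hin : ∀ x, (¬ ∀ j, x j ∈ Λ) → Din G W Λ u i x = 0 := fun x hx => pin_of_not_mem Λ _ hx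
  have hout : ∀ x, (∀ j, x j ∈ Λ) → Dout G W Λ u i x = 0 := fun x hx => pout_of_mem Λ _ hx
  constructor
  · refine ne_top_of_le_ne_top hS (energy_mono W fun x => ?_)
    by_cases hx : ∀ j, x j ∈ Λ
    · rw [hout x hx, add_zero]
    · rw [hin x hx, norm_zero]; exact norm_nonneg _
  · refine ne_top_of_le_ne_top hS (energy_mono W fun x => ?_)
    by_cases hx : ∀ j, x j ∈ Λ
    · rw [hout x hx, norm_zero]; exact norm_nonneg _
    · rw [hin x hx, zero_add]

end assembly

/-- Let `Λ ⊆ V`, and decompose `H = H_in ⊕ H_out`, so that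
`D = [[D_in, C], [C*, D_out]]` in block form.  Assume: (1) the restricted complex `S_n|_Λ`
is globally `χ`-complete (hence `D_in` is essentially self-adjoint); (2) `D_out` is
essentially self-adjoint on its finitely supported domain; (3) the coupling `C` extends to
a compact (in particular bounded) operator.  Then the global Gauss–Bonnet operator `D` is
essentially self-adjoint on `⊕_{i=0}^n C_c^i(V)`. -/
theorem gaussBonnet_esa_of_region_and_compact_coupling
    {V : Type*} [Countable V] (G : WG V) {n : ℕ} (hn : 2 ≤ n) (W : CliqueWeights G n)
    (Λ : Set V)
    (h1 : GloballyChiCompleteOn W Λ)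
    (h2 : ∀ u : ∀ i : ℕ, (Fin (i + 1) → V) → ℂ,
      CochainFamily G n u → (∀ i, projIn Λ u i = 0) →
      MemL2Family W u → MemL2Family W (Dout G W Λ u) →
      ∃ uk : ℕ → ∀ i : ℕ, (Fin (i + 1) → V) → ℂ,
        (∀ k, CochainFamily G n (uk k) ∧ FinSuppFamily (uk k) ∧
          ∀ i, projIn Λ (uk k) i = 0) ∧
        TendstoL2Family W uk u ∧
        TendstoL2Family W (fun k => Dout G W Λ (uk k)) (Dout G W Λ u))
    (h3bdd : ∃ M : ℝ, 0 ≤ M ∧ ∀ u : ∀ i : ℕ, (Fin (i + 1) → V) → ℂ,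
      CochainFamily G n u → FinSuppFamily u →
      normH W (Coup G W Λ u) ≤ M * normH W u)
    (h3cpt : ∀ u : ℕ → ∀ i : ℕ, (Fin (i + 1) → V) → ℂ,
      (∀ k, CochainFamily G n (u k) ∧ FinSuppFamily (u k) ∧ normH W (u k) ≤ 1) →
      ∃ φ : ℕ → ℕ, StrictMono φ ∧
        ∀ ε : ℝ, 0 < ε → ∃ N : ℕ, ∀ a b : ℕ, N ≤ a → N ≤ b →
          normH W (fun i x => Coup G W Λ (u (φ a)) i x - Coup G W Λ (u (φ b)) i x) < ε) :
    ESA_D W := by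
  intro u hu huL hDL
  obtain ⟨M, hM, hMb⟩ := h3bdd
  have hn1 : 1 ≤ n := by omega
  have hK : ∀ i, i + 1 ≤ n → ∀ g : (Fin (i + 2) → V) → ℂ, IsCochain G (i + 1) g →
      (Function.support g).Finite →
      energy W i (cpl W Λ i g) ≤ ENNReal.ofReal M * energy W (i + 1) g :=
    fun i hi g hg hgf => cpl_bound_finite W Λ hM hMb hi hg hgf
  have hE : ∀ i, energy W i (u i) ≠ ⊤ := fun i => (memL2_iff W _).1 (huL i)
  have hdiag := energy_diag_ne_top hn1 hM hK hu hE fun i => (memL2_iff W _).1 (hDL i)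
  obtain ⟨w, hw, hwlim, hDw⟩ := exists_inner_approx h1 hu hE fun i => (hdiag i).1
  -- the outer part: `D_out` only sees the component `Q u`
  have hQQ : projOut Λ (projOut Λ u) = projOut Λ u := by
    funext i
    exact pout_eq_self_of_pin_eq_zero (pin_pout (Λ := Λ) (u i))
  have hDQ : Dout G W Λ (projOut Λ u) = Dout G W Λ u := by rw [Dout, hQQ]; rfl
  have hQE : ∀ i, energy W i (projOut Λ u i) ≠ ⊤ := fun i =>
    ne_top_of_le_ne_top (hE i) (energy_mono W (norm_pout_le Λ (u i)))
  obtain ⟨v, hv, hvlim, hDv⟩ := h2 (projOut Λ u)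
    ⟨fun i => (hu.1 i).pout Λ, fun i hi => by
      change pout Λ (u i) = 0
      rw [hu.2 i hi, pout_zero]⟩
    (fun i => pin_pout (Λ := Λ) (u i)) (fun i => (memL2_iff W _).2 (hQE i))
    (fun i => by rw [hDQ]; exact (memL2_iff W _).2 (hdiag i).2)
  rw [hDQ] at hDv
  have hvQ : ∀ k, projOut Λ (v k) = v k := fun k => funext fun i =>
    pout_eq_self_of_pin_eq_zero (Λ := Λ) ((hv k).2.2 i)
  have hvlim' : ∀ i, Tendsto (fun k => energy W i (fun x => v k i x - pout Λ (u i) x))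
      atTop (𝓝 0) := fun i =>
    (hvlim i).energy W (fun k => energy_ne_top_of_finite W ((hv k).2.1 i)) (hQE i)
  have hDv' : ∀ i, Tendsto (fun k => energy W i
      (fun x => Dout G W Λ (v k) i x - Dout G W Λ u i x)) atTop (𝓝 0) := fun i => by
    refine (hDv i).energy W (fun k => energy_ne_top_of_finite W ?_) (hdiag i).2
    have e : Dout G W Λ (v k) = projOut Λ (Dop G W (v k)) := by unfold Dout; rw [hvQ]
    change (Function.support (Dout G W Λ (v k) i)).Finite
    rw [e]
    exact finite_support_pout (finite_support_Dop (hv k).1.2 (hv k).2.1 i)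
  -- the approximating families and their components
  let uk : ℕ → ∀ i : ℕ, (Fin (i + 1) → V) → ℂ := fun k i x => w k i x + v k i x
  have hukc : ∀ k, CochainFamily G n (uk k) := fun k =>
    ⟨fun i => ((hw k).1.1 i).add ((hv k).1.1 i), fun i hi => by
      funext x
      simp [uk, (hw k).1.2 i hi, (hv k).1.2 i hi]⟩
  have hukf : ∀ k, FinSuppFamily (uk k) := fun k i =>
    (((hw k).2.1 i).union ((hv k).2.1 i)).subset (Function.support_add _ _)
  have hPuk : ∀ k, projIn Λ (uk k) = w k := fun k => by
    funext i x
    have hz := (hv k).2.2 i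
    have hwi := (hw k).2.2 i
    change pin Λ (uk k i) x = w k i x
    by_cases hx : ∀ j, x j ∈ Λ
    · have hz' : v k i x = 0 := by
        rw [← pin_of_mem Λ (v k i) hx]; exact congrFun hz x
      rw [pin_of_mem Λ _ hx]
      simp [uk, hz']
    · rw [pin_of_not_mem Λ _ hx, ← hwi, pin_of_not_mem Λ _ hx]
  have hQuk : ∀ k, projOut Λ (uk k) = v k := fun k => by
    funext i x
    change uk k i x - projIn Λ (uk k) i x = v k i x
    rw [hPuk]
    simp [uk]
  have hPw : ∀ k, projIn Λ (w k) = w k := fun k => funext fun i => (hw k).2.2 i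
  have hDin : ∀ k, Din G W Λ (uk k) = Din G W Λ (w k) := fun k => by rw [Din, Din, hPuk, hPw]
  have hDout : ∀ k, Dout G W Λ (uk k) = Dout G W Λ (v k) := fun k => by rw [Dout, Dout, hQuk, hvQ]
  have hlim : ∀ i, Tendsto (fun k => energy W i (fun x => uk k i x - u i x)) atTop (𝓝 0) := by
    intro i
    refine tendsto_zero_of_le_two_mul_add (hwlim i) (hvlim' i) fun k => ?_
    have e : (fun x => uk k i x - u i x)
        = fun x => (w k i x - pin Λ (u i) x) + (v k i x - pout Λ (u i) x) := by
      funext x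
      rw [← pin_add_pout Λ (u i) x]
      simp only [uk]
      ring
    rw [e]
    exact energy_add_le W _ _
  have hsubc : ∀ k, CochainFamily G n (fun i x => uk k i x - u i x) := fun k =>
    ⟨fun i => ((hukc k).1 i).sub (hu.1 i), fun i hi => by
      funext x
      simp [(hukc k).2 i hi, hu.2 i hi]⟩
  have hsubE : ∀ k i, energy W i (fun x => uk k i x - u i x) ≠ ⊤ := fun k i =>
    energy_sub_ne_top W (energy_ne_top_of_finite W (hukf k i)) (hE i)
  refine ⟨uk, fun k => ⟨hukc k, hukf k⟩, fun i => tendstoL2_of_energy W (hlim i), fun i =>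
    tendstoL2_of_energy W ?_⟩
  have hoff := tendsto_zero_of_le_two_mul_add
    (tendsto_zero_of_le_const_mul ENNReal.ofReal_ne_top (hlim (i + 1))
      fun k => energy_Coup_le hK (hsubc k) i)
    (tendsto_zero_of_le_const_mul ENNReal.ofReal_ne_top (hlim (i - 1))
      fun k => energy_cross_le hn1 hM hK (hsubc k) (hsubE k) i)
    fun k => energy_add_le W _ _
  have hdg := tendsto_zero_of_le_two_mul_add (hDw i) (hDv' i) fun k => energy_add_le W _ _
  refine tendsto_zero_of_le_two_mul_add hdg hoff fun k => ?_
  simp only [Dop_sub_blocks (Λ := Λ) hn1 (hukc k).2 hu.2, hDin, hDout]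
  exact energy_add_le W _ _

end DiscreteHodge
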